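/- arXiv:2511.12172 — 2 statements merged into one kernel-verified Lean document; each statement's English description precedes it below -/
import Mathlib

section
/- There exists a map f from the unit sphere S⁷ = Metric.sphere 0 1 in EuclideanSpace ℝ (Fin 8) to EuclideanSpace ℝ (Fin 11) such that: (i) f is infinitely differentiable as a map of smooth manifolds (ContMDiff with respect to the standard smooth structure on the sphere modeled on EuclideanSpace ℝ (Fin 7) and the standard structure on EuclideanSpace ℝ (Fin 11)); (ii) f(−x) = f(x) for every x ∈ S⁷, where −x denotes the antipodal point; (iii) whenever f(x) = f(y) for x, y ∈ S⁷, one has x = y or x = −y; and (iv) for every x ∈ S⁷ the differential (mfderiv) of f at x is an injective linear map on the tangent space of S⁷ at x. (Such an f witnesses a smooth embedding of real projective 7-space ℝP⁷ = S⁷/{±1} into ℝ¹¹, which is the paper's main theorem.) -/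
open Metric Manifold

instance : Fact (Module.finrank ℝ (EuclideanSpace ℝ (Fin 8)) = 7 + 1) :=
  ⟨by simp [finrank_euclideanSpace_fin]⟩

/-! Left multiplication by unit quaternions acts on `S⁷ ⊂ ℍ²` with quotient `S⁴`, the Hopf map
being `(p, q) ↦ (‖p‖² - ‖q‖², q̄p)`. Dividing only by the circle that commutes with `i` gives `ℂP³`,
which `(p̄ip, q̄iq)` embeds over `S⁴` as the unit sphere bundle of a rank-three subbundle `E` of the
trivial bundle `Im ℍ ⊕ Im ℍ`. So `ℂP³ ⊂ ℝ⁵ × ℝ⁶ = ℝ¹¹`, with normal bundle `ℝ² ⊕ E^⊥`.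

The space `ℝP⁷` is the unit circle bundle in the tangent line bundle `L` along the fibres of
`ℂP³ → S⁴`: the point `(p, q)` is the unit tangent vector that `j` gives at the image of `(p, q)`.
A monomorphism from `L` to the normal bundle therefore displaces `ℂP³` to an embedding of `ℝP⁷`.

For `q ≠ 0` the formula `m ↦ q̄mq` defines such a monomorphism into `E^⊥`. It cannot be extended to
`q = 0` inside `E^⊥`, but inside `ℝ² ⊕ E^⊥`, where trivialised by `p ≠ 0`, it can: `E`, spanned by
the tangent line `L` and the position vector, embeds conformally into `Im ℍ ⊕ Im ℍ = ℝ ⊕ (ℝ² ⊕ E^⊥)`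
by `v ↦ (0, a² v ā²)` with `a = q̄p`; this embedding is homotopic to `v ↦ (v, 0)`, and along the
homotopy the image of the position vector can be rotated to the first unit vector, passing through a
field `directionPair` that is never a positive multiple of either of the two.
-/

noncomputable section

open scoped Quaternion RealInnerProductSpace ContDiff

namespace RP7

instance : StarModule ℝ ℍ := ⟨fun r a => by simp⟩

/-- The quaternion `a + bi + cj + dk`; the anonymous constructor would produce a term of a
quaternion algebra that is not recognised as `ℍ`. -/
def quat (a b c d : ℝ) : ℍ := ⟨a, b, c, d⟩

@[simp] lemma quat_re (a b c d : ℝ) : (quat a b c d).re = a := rfl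
@[simp] lemma quat_imI (a b c d : ℝ) : (quat a b c d).imI = b := rfl
@[simp] lemma quat_imJ (a b c d : ℝ) : (quat a b c d).imJ = c := rfl
@[simp] lemma quat_imK (a b c d : ℝ) : (quat a b c d).imK = d := rfl

/-- The quaternion unit `i`. -/
def qi : ℍ := ⟨0, 1, 0, 0⟩

/-- The quaternion unit `j`. -/
def qj : ℍ := ⟨0, 0, 1, 0⟩

@[simp] lemma qi_re : qi.re = 0 := rfl
@[simp] lemma qi_imI : qi.imI = 1 := rfl
@[simp] lemma qi_imJ : qi.imJ = 0 := rfl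
@[simp] lemma qi_imK : qi.imK = 0 := rfl
@[simp] lemma qj_re : qj.re = 0 := rfl
@[simp] lemma qj_imI : qj.imI = 0 := rfl
@[simp] lemma qj_imJ : qj.imJ = 1 := rfl
@[simp] lemma qj_imK : qj.imK = 0 := rfl

lemma norm_sq_eq (a : ℍ) : ‖a‖ ^ 2 = a.re ^ 2 + a.imI ^ 2 + a.imJ ^ 2 + a.imK ^ 2 := by
  rw [sq, ← Quaternion.normSq_eq_norm_mul_self, Quaternion.normSq_def']

lemma star_mul_self_eq (a : ℍ) : star a * a = ((‖a‖ ^ 2 : ℝ) : ℍ) := by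
  rw [Quaternion.star_mul_self, Quaternion.normSq_eq_norm_mul_self, sq]

lemma self_mul_star_eq (a : ℍ) : a * star a = ((‖a‖ ^ 2 : ℝ) : ℍ) := by
  rw [Quaternion.self_mul_star, Quaternion.normSq_eq_norm_mul_self, sq]

lemma norm_qi : ‖qi‖ = 1 := by
  rw [← sq_eq_sq₀ (norm_nonneg _) zero_le_one, norm_sq_eq]; simp

lemma conj_conj (c d u : ℍ) : star (d * c) * u * (d * c) = star c * (star d * u * d) * c := by
  simp only [star_mul, mul_assoc]

lemma mul_mul_star_re {u : ℍ} (hu : u.re = 0) (c : ℍ) : (c * u * star c).re = 0 := by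
  simp [hu]; ring

lemma star_mul_mul_re {u : ℍ} (hu : u.re = 0) (c : ℍ) : (star c * u * c).re = 0 := by
  simpa using mul_mul_star_re hu (star c)

lemma inner_mul_mul_star (c u v : ℍ) :
    ⟪c * u * star c, c * v * star c⟫ = ‖c‖ ^ 4 * ⟪u, v⟫ := by
  have h : c * u * star c * star (c * v * star c) = ‖c‖ ^ 2 • (c * (u * star v) * star c) := by
    simp only [star_mul, star_star]
    rw [show c * u * star c * (c * (star v * star c)) = c * u * (star c * c) * (star v * star c) by
      simp only [mul_assoc], star_mul_self_eq, Quaternion.mul_coe_eq_smul]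
    simp only [smul_mul_assoc, mul_assoc]
  rw [Quaternion.inner_def, h, Quaternion.inner_def, Quaternion.re_smul, smul_eq_mul]
  have h' : (c * (u * star v) * star c).re = ‖c‖ ^ 2 * (u * star v).re := by
    rw [norm_sq_eq]; simp; ring
  rw [h']; ring

lemma inner_star_mul_mul (c u v : ℍ) :
    ⟪star c * u * c, star c * v * c⟫ = ‖c‖ ^ 4 * ⟪u, v⟫ := by
  simpa using inner_mul_mul_star (star c) u v

lemma inner_qi (u : ℍ) : ⟪u, qi⟫ = u.imI := by simp [Quaternion.inner_def]

section ContDiff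

variable {F : Type*} [NormedAddCommGroup F] [NormedSpace ℝ F] {n : WithTop ℕ∞} {f : F → ℍ} {x : F}

lemma contDiffAt_quaternion : ContDiffAt ℝ n f x ↔
    ContDiffAt ℝ n (fun y => (f y).re) x ∧ ContDiffAt ℝ n (fun y => (f y).imI) x ∧
      ContDiffAt ℝ n (fun y => (f y).imJ) x ∧ ContDiffAt ℝ n (fun y => (f y).imK) x := by
  rw [← Quaternion.linearIsometryEquivTuple.toContinuousLinearEquiv.comp_contDiffAt_iff,
    contDiffAt_euclidean]
  simp [Fin.forall_fin_succ]

@[fun_prop]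
lemma contDiffAt_quat {a b c d : F → ℝ} (ha : ContDiffAt ℝ n a x) (hb : ContDiffAt ℝ n b x)
    (hc : ContDiffAt ℝ n c x) (hd : ContDiffAt ℝ n d x) :
    ContDiffAt ℝ n (fun y => quat (a y) (b y) (c y) (d y)) x :=
  contDiffAt_quaternion.2 ⟨ha, hb, hc, hd⟩

@[fun_prop]
lemma contDiffAt_re (hf : ContDiffAt ℝ n f x) : ContDiffAt ℝ n (fun y => (f y).re) x :=
  (contDiffAt_quaternion.1 hf).1

@[fun_prop]
lemma contDiffAt_imI (hf : ContDiffAt ℝ n f x) : ContDiffAt ℝ n (fun y => (f y).imI) x :=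
  (contDiffAt_quaternion.1 hf).2.1

@[fun_prop]
lemma contDiffAt_imJ (hf : ContDiffAt ℝ n f x) : ContDiffAt ℝ n (fun y => (f y).imJ) x :=
  (contDiffAt_quaternion.1 hf).2.2.1

@[fun_prop]
lemma contDiffAt_imK (hf : ContDiffAt ℝ n f x) : ContDiffAt ℝ n (fun y => (f y).imK) x :=
  (contDiffAt_quaternion.1 hf).2.2.2

@[fun_prop]
lemma contDiffAt_star (hf : ContDiffAt ℝ n f x) : ContDiffAt ℝ n (fun y => star (f y)) x :=
  (starL' ℝ : ℍ ≃L[ℝ] ℍ).contDiff.contDiffAt.comp x hf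

@[fun_prop]
lemma contDiffAt_norm_sq (hf : ContDiffAt ℝ n f x) : ContDiffAt ℝ n (fun y => ‖f y‖ ^ 2) x :=
  hf.norm_sq ℝ

end ContDiff

section Embedding

/-- Fibres of `ℝ² ⊕ (ℍ ⊕ ℍ)`, the ambient space of the normal bundle of `ℂP³` in `ℝ¹¹`: two radial
parameters followed by the displacement of the two fibre coordinates. -/
abbrev NormalData := ℝ × ℝ × ℍ × ℍ

/-- A monomorphism from the vertical tangent line bundle of `ℂP³ → S⁴` to the normal bundle of
`ℂP³ ⊂ ℝ¹¹`, both pulled back to `S⁷ ⊂ ℍ × ℍ`. On `S⁷` the line bundle is spanned by `j` and `k`,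
and the circle `{‖g‖ = 1, ḡ i g = i}` acts on it by conjugation. -/
structure IsNormalMono (Φ : ℍ × ℍ → ℍ →ₗ[ℝ] NormalData) : Prop where
  contDiffAt : ∀ x : ℍ × ℍ, ‖x.1‖ ^ 2 + ‖x.2‖ ^ 2 = 1 → ContDiffAt ℝ ∞ (fun y => Φ y qj) x
  equivariant : ∀ g : ℍ, ‖g‖ = 1 → star g * qi * g = qi →
    ∀ (x : ℍ × ℍ) (m : ℍ), Φ (g * x.1, g * x.2) m = Φ x (star g * m * g)
  eq_zero : ∀ x : ℍ × ℍ, ‖x.1‖ ^ 2 + ‖x.2‖ ^ 2 = 1 →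
    ∀ m : ℍ, m.re = 0 → m.imI = 0 → Φ x m = 0 → m = 0
  re_eq_zero : ∀ (x : ℍ × ℍ) (m : ℍ), m.re = 0 → (Φ x m).2.2.1.re = 0 ∧ (Φ x m).2.2.2.re = 0
  normal_fst : ∀ (x : ℍ × ℍ) (m : ℍ), star (star x.2 * x.1) * (Φ x m).2.2.2 * (star x.2 * x.1) =
    -((‖x.1‖ ^ 2) ^ 2 • (Φ x m).2.2.1)
  normal_snd : ∀ (x : ℍ × ℍ) (m : ℍ), (star x.2 * x.1) * (Φ x m).2.2.1 * star (star x.2 * x.1) =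
    -((‖x.2‖ ^ 2) ^ 2 • (Φ x m).2.2.2)

/-- The ambient space `ℝ × ℍ³` of the embedding. -/
abbrev Code := ℝ × ℍ × ℍ × ℍ

/-- The map `(p, q) ↦ (‖p‖² - ‖q‖², q̄p, p̄ip, q̄iq)`, which factors through an embedding of `ℂP³`,
displaced by `Φ (p, q) j` in the normal directions. The radial displacements enter through
exponentials, so that `Φ` need not be small. -/
def perturbedHopf (Φ : ℍ × ℍ → ℍ →ₗ[ℝ] NormalData) (x : ℍ × ℍ) : Code :=
  (Real.exp (Φ x qj).2.1 * (‖x.1‖ ^ 2 - ‖x.2‖ ^ 2),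
    Real.exp (Φ x qj).2.1 • (star x.2 * x.1),
    Real.exp (Φ x qj).1 • (star x.1 * qi * x.1) + (Φ x qj).2.2.1,
    Real.exp (Φ x qj).1 • (star x.2 * qi * x.2) + (Φ x qj).2.2.2)

/-- The unperturbed invariants of a point together with its displacement. -/
def hopfData (Φ : ℍ × ℍ → ℍ →ₗ[ℝ] NormalData) (x : ℍ × ℍ) :
    (ℝ × ℝ × ℍ) × (ℍ × ℍ) × NormalData :=
  ((‖x.1‖ ^ 2, ‖x.2‖ ^ 2, star x.2 * x.1), (star x.1 * qi * x.1, star x.2 * qi * x.2), Φ x qj)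

/-- The second radial parameter, read off from the squared radius `r` and a value of
`perturbedHopf`. -/
def baseParam (y : ℝ × Code) : ℝ := Real.log ((y.2.1 ^ 2 + 4 * ‖y.2.2.1‖ ^ 2) / y.1 ^ 2) / 2

/-- The first stage of the inverse of `perturbedHopf`: recovers the point of `S⁴`. -/
def decodeBase (y : ℝ × Code) : ℝ × (ℝ × ℝ × ℍ) × ℍ × ℍ :=
  (baseParam y, ((y.1 + Real.exp (-baseParam y) * y.2.1) / 2,
    (y.1 - Real.exp (-baseParam y) * y.2.1) / 2, Real.exp (-baseParam y) • y.2.2.1), y.2.2.2)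

/-- The projection of `(x, y)` along the normal space onto the first fibre coordinate, over the
point of `S⁴` with coordinates `(ρ, σ, a)`. -/
def fibreCoord (ρ σ : ℝ) (a x y : ℍ) : ℍ :=
  (ρ ^ 2 + σ ^ 2)⁻¹ • (ρ ^ 2 • x + star a * y * a)

/-- The second stage of the inverse of `perturbedHopf`: recovers the fibre coordinates and the
displacement. -/
def decodeFibre (z : ℝ × (ℝ × ℝ × ℍ) × ℍ × ℍ) : (ℝ × ℝ × ℍ) × (ℍ × ℍ) × NormalData :=
  let u := fibreCoord z.2.1.1 z.2.1.2.1 z.2.1.2.2 z.2.2.1 z.2.2.2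
  let v := fibreCoord z.2.1.2.1 z.2.1.1 (star z.2.1.2.2) z.2.2.2 z.2.2.1
  let s := Real.log ((‖u‖ ^ 2 + ‖v‖ ^ 2) / (z.2.1.1 ^ 2 + z.2.1.2.1 ^ 2)) / 2
  (z.2.1, (Real.exp (-s) • u, Real.exp (-s) • v), s, z.1, z.2.2.1 - u, z.2.2.2 - v)

lemma fibreCoord_eq {ρ σ s : ℝ} {a u v X Y : ℍ} (h : ρ ^ 2 + σ ^ 2 ≠ 0)
    (huv : star a * v * a = σ ^ 2 • u) (hXY : star a * Y * a = -(ρ ^ 2 • X)) :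
    fibreCoord ρ σ a (s • u + X) (s • v + Y) = s • u := by
  rw [fibreCoord, inv_smul_eq_iff₀ h, mul_add, add_mul, hXY, mul_smul_comm, smul_mul_assoc, huv]
  module

lemma norm_sq_add_pos {x : ℍ × ℍ} (hx : x ≠ 0) : 0 < ‖x.1‖ ^ 2 + ‖x.2‖ ^ 2 := by
  by_contra! h
  have h₁ : ‖x.1‖ ^ 2 = 0 := by nlinarith [sq_nonneg ‖x.1‖, sq_nonneg ‖x.2‖]
  have h₂ : ‖x.2‖ ^ 2 = 0 := by nlinarith [sq_nonneg ‖x.1‖, sq_nonneg ‖x.2‖]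
  exact hx (Prod.ext (by simpa using h₁) (by simpa using h₂))

lemma norm_pow_four_add_pos {x : ℍ × ℍ} (hx : x ≠ 0) :
    0 < (‖x.1‖ ^ 2) ^ 2 + (‖x.2‖ ^ 2) ^ 2 := by
  nlinarith [norm_sq_add_pos hx, sq_nonneg (‖x.1‖ ^ 2 - ‖x.2‖ ^ 2)]

lemma log_div_eq_of_eq {t r N : ℝ} (hr : r ≠ 0) (hN : N = Real.exp t ^ 2 * r) :
    Real.log (N / r) / 2 = t := by
  rw [hN, mul_div_cancel_right₀ _ hr, Real.log_pow, Real.log_exp]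
  push_cast
  ring

variable {Φ : ℍ × ℍ → ℍ →ₗ[ℝ] NormalData}

/-- The input of the decoding: the squared radius and the perturbed Hopf map. -/
def codeWithRadius (Φ : ℍ × ℍ → ℍ →ₗ[ℝ] NormalData) (x : ℍ × ℍ) : ℝ × Code :=
  (‖x.1‖ ^ 2 + ‖x.2‖ ^ 2, perturbedHopf Φ x)

lemma sq_add_four_mul_norm_sq (x : ℍ × ℍ) :
    (perturbedHopf Φ x).1 ^ 2 + 4 * ‖(perturbedHopf Φ x).2.1‖ ^ 2 =
      Real.exp (Φ x qj).2.1 ^ 2 * (‖x.1‖ ^ 2 + ‖x.2‖ ^ 2) ^ 2 := by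
  simp only [perturbedHopf, norm_smul, norm_mul, norm_star, mul_pow, Real.norm_eq_abs, sq_abs]
  ring

lemma decodeBase_codeWithRadius {x : ℍ × ℍ} (hx : x ≠ 0) :
    decodeBase (codeWithRadius Φ x) =
      ((Φ x qj).2.1, (‖x.1‖ ^ 2, ‖x.2‖ ^ 2, star x.2 * x.1), (perturbedHopf Φ x).2.2) := by
  have ht : baseParam (codeWithRadius Φ x) = (Φ x qj).2.1 :=
    log_div_eq_of_eq (pow_ne_zero 2 (norm_sq_add_pos hx).ne') (sq_add_four_mul_norm_sq x)
  rw [decodeBase, ht]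
  simp only [codeWithRadius, perturbedHopf, smul_smul, ← mul_assoc, ← Real.exp_add,
    neg_add_cancel, Real.exp_zero, one_mul, one_smul]
  ring_nf

lemma star_hopf_conj_snd (p q : ℍ) : star (star q * p) * (star q * qi * q) * (star q * p) =
    (‖q‖ ^ 2) ^ 2 • (star p * qi * p) := by
  have h : star (star q * p) * (star q * qi * q) * (star q * p) =
      star p * (q * star q) * qi * (q * star q) * p := by
    simp only [star_mul, star_star, mul_assoc]
  rw [h, self_mul_star_eq, Quaternion.mul_coe_eq_smul, Quaternion.mul_coe_eq_smul]
  simp only [smul_mul_assoc, smul_smul, sq]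

lemma fibreCoord_fst (hΦ : IsNormalMono Φ) {x : ℍ × ℍ} (hx : x ≠ 0) :
    fibreCoord (‖x.1‖ ^ 2) (‖x.2‖ ^ 2) (star x.2 * x.1) (perturbedHopf Φ x).2.2.1
      (perturbedHopf Φ x).2.2.2 = Real.exp (Φ x qj).1 • (star x.1 * qi * x.1) :=
  fibreCoord_eq (norm_pow_four_add_pos hx).ne' (star_hopf_conj_snd x.1 x.2) (hΦ.normal_fst x qj)

lemma fibreCoord_snd (hΦ : IsNormalMono Φ) {x : ℍ × ℍ} (hx : x ≠ 0) :
    fibreCoord (‖x.2‖ ^ 2) (‖x.1‖ ^ 2) (star (star x.2 * x.1)) (perturbedHopf Φ x).2.2.2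
      (perturbedHopf Φ x).2.2.1 = Real.exp (Φ x qj).1 • (star x.2 * qi * x.2) :=
  fibreCoord_eq (by rw [add_comm]; exact (norm_pow_four_add_pos hx).ne')
    (by rw [star_mul, star_star]; exact star_hopf_conj_snd x.2 x.1)
    (by rw [star_star]; exact hΦ.normal_snd x qj)

lemma norm_smul_conj_sq_add (s : ℝ) (x : ℍ × ℍ) :
    ‖Real.exp s • (star x.1 * qi * x.1)‖ ^ 2 + ‖Real.exp s • (star x.2 * qi * x.2)‖ ^ 2 =
      Real.exp s ^ 2 * ((‖x.1‖ ^ 2) ^ 2 + (‖x.2‖ ^ 2) ^ 2) := by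
  simp only [norm_smul, norm_mul, norm_star, norm_qi, mul_pow, Real.norm_eq_abs, sq_abs]
  ring

lemma decodeFibre_eq_hopfData (hΦ : IsNormalMono Φ) {x : ℍ × ℍ} (hx : x ≠ 0) :
    decodeFibre ((Φ x qj).2.1, (‖x.1‖ ^ 2, ‖x.2‖ ^ 2, star x.2 * x.1), (perturbedHopf Φ x).2.2) =
      hopfData Φ x := by
  simp only [decodeFibre, fibreCoord_fst hΦ hx, fibreCoord_snd hΦ hx,
    log_div_eq_of_eq (norm_pow_four_add_pos hx).ne' (norm_smul_conj_sq_add _ x)]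
  simp only [perturbedHopf, hopfData, smul_smul, ← Real.exp_add, neg_add_cancel, Real.exp_zero,
    one_smul, add_sub_cancel_left]

lemma decode_codeWithRadius (hΦ : IsNormalMono Φ) {x : ℍ × ℍ} (hx : x ≠ 0) :
    decodeFibre (decodeBase (codeWithRadius Φ x)) = hopfData Φ x := by
  rw [decodeBase_codeWithRadius hx, decodeFibre_eq_hopfData hΦ hx]

lemma differentiableAt_decodeBase {x : ℍ × ℍ} (hx : x ≠ 0) :
    DifferentiableAt ℝ decodeBase (codeWithRadius Φ x) := by
  have hr := norm_sq_add_pos hx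
  have h₁ : (codeWithRadius Φ x).1 ^ 2 ≠ 0 := pow_ne_zero 2 hr.ne'
  have h₂ : ((codeWithRadius Φ x).2.1 ^ 2 + 4 * ‖(codeWithRadius Φ x).2.2.1‖ ^ 2) /
      (codeWithRadius Φ x).1 ^ 2 ≠ 0 := by
    refine div_ne_zero ?_ h₁
    rw [codeWithRadius, sq_add_four_mul_norm_sq]
    positivity
  refine ContDiffAt.differentiableAt (n := 1) ?_ one_ne_zero
  unfold decodeBase baseParam
  fun_prop (disch := assumption)

@[fun_prop]
lemma contDiffAt_fibreCoord {F : Type*} [NormedAddCommGroup F] [NormedSpace ℝ F]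
    {n : WithTop ℕ∞} {ρ σ : F → ℝ} {a x y : F → ℍ} {z : F} (hρ : ContDiffAt ℝ n ρ z)
    (hσ : ContDiffAt ℝ n σ z) (ha : ContDiffAt ℝ n a z) (hx : ContDiffAt ℝ n x z)
    (hy : ContDiffAt ℝ n y z) (h : ρ z ^ 2 + σ z ^ 2 ≠ 0) :
    ContDiffAt ℝ n (fun w => fibreCoord (ρ w) (σ w) (a w) (x w) (y w)) z := by
  unfold fibreCoord
  fun_prop (disch := assumption)

lemma differentiableAt_decodeFibre (hΦ : IsNormalMono Φ) {x : ℍ × ℍ} (hx : x ≠ 0) :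
    DifferentiableAt ℝ decodeFibre (decodeBase (codeWithRadius Φ x)) := by
  rw [decodeBase_codeWithRadius hx]
  have hr := norm_pow_four_add_pos hx
  have h₁ := hr.ne'
  have h₂ := h₁
  rw [add_comm] at h₂
  have h₃ : (Real.exp (Φ x qj).1 ^ 2 * ((‖x.1‖ ^ 2) ^ 2 + (‖x.2‖ ^ 2) ^ 2)) /
      ((‖x.1‖ ^ 2) ^ 2 + (‖x.2‖ ^ 2) ^ 2) ≠ 0 := by positivity
  rw [← norm_smul_conj_sq_add, ← fibreCoord_fst hΦ hx, ← fibreCoord_snd hΦ hx] at h₃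
  refine ContDiffAt.differentiableAt (n := 1) ?_ one_ne_zero
  unfold decodeFibre
  fun_prop (disch := assumption)

lemma ne_zero_of_sphere {x : ℍ × ℍ} (hx : ‖x.1‖ ^ 2 + ‖x.2‖ ^ 2 = 1) : x ≠ 0 := by
  rintro rfl
  simp at hx


lemma hopfData_eq_of_perturbedHopf_eq (hΦ : IsNormalMono Φ) {x y : ℍ × ℍ} (hx : x ≠ 0)
    (hy : y ≠ 0) (hxy : ‖x.1‖ ^ 2 + ‖x.2‖ ^ 2 = ‖y.1‖ ^ 2 + ‖y.2‖ ^ 2)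
    (h : perturbedHopf Φ x = perturbedHopf Φ y) : hopfData Φ x = hopfData Φ y := by
  rw [← decode_codeWithRadius hΦ hx, ← decode_codeWithRadius hΦ hy, codeWithRadius, hxy, h,
    codeWithRadius]

lemma hasLineDerivAt_hopfData (hΦ : IsNormalMono Φ) {x v : ℍ × ℍ} (hx : x ≠ 0)
    (h : HasLineDerivAt ℝ (codeWithRadius Φ) 0 x v) : HasLineDerivAt ℝ (hopfData Φ) 0 x v := by
  have hx₀ : codeWithRadius Φ (x + (0 : ℝ) • v) = codeWithRadius Φ x := by simp
  have hdecode : HasFDerivAt (decodeFibre ∘ decodeBase) _ (codeWithRadius Φ x) :=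
    ((differentiableAt_decodeFibre hΦ hx).comp _ (differentiableAt_decodeBase hx)).hasFDerivAt
  have hcomp := (hx₀ ▸ hdecode).comp_hasDerivAt (0 : ℝ) h
  rw [map_zero] at hcomp
  have hline : ContinuousAt (fun t : ℝ => x + t • v) 0 := by fun_prop
  refine hcomp.congr_of_eventuallyEq ?_
  filter_upwards [hline.eventually_ne (y := 0) (by simpa using hx)] with t ht
  exact (decode_codeWithRadius hΦ ht).symm

lemma exists_eq_mul_of_fst_ne_zero {p q p' q' : ℍ} (hp : p ≠ 0) (hn : ‖p'‖ = ‖p‖)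
    (hbase : star q' * p' = star q * p) (hfibre : star p' * qi * p' = star p * qi * p) :
    ∃ g : ℍ, ‖g‖ = 1 ∧ star g * qi * g = qi ∧ p' = g * p ∧ q' = g * q := by
  obtain ⟨g, rfl⟩ : ∃ g, p' = g * p := ⟨p' * p⁻¹, by simp [hp]⟩
  have hg : ‖g‖ = 1 := by simpa [hp] using hn
  have hq : star q' * g = star q := by simpa [← mul_assoc, hp] using hbase
  refine ⟨g, hg, ?_, rfl, ?_⟩
  · rw [conj_conj] at hfibre
    exact mul_left_cancel₀ (star_ne_zero.2 hp) (mul_right_cancel₀ hp hfibre)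
  · rw [← star_star q, ← hq, star_mul, star_star, ← mul_assoc, self_mul_star_eq, hg]
    simp

lemma exists_eq_mul_of_hopfData_eq {x y : ℍ × ℍ} (hx : x ≠ 0)
    (h : hopfData Φ y = hopfData Φ x) :
    ∃ g : ℍ, ‖g‖ = 1 ∧ star g * qi * g = qi ∧ y.1 = g * x.1 ∧ y.2 = g * x.2 := by
  simp only [hopfData, Prod.mk.injEq] at h
  obtain ⟨⟨hp, hq, hbase⟩, ⟨hfst, hsnd⟩, -⟩ := h
  rw [sq_eq_sq₀ (norm_nonneg _) (norm_nonneg _)] at hp hq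
  by_cases hx₁ : x.1 = 0
  · have hx₂ : x.2 ≠ 0 := fun hx₂ => hx (Prod.ext hx₁ hx₂)
    obtain ⟨g, hg, hgi, h₂, h₁⟩ :=
      exists_eq_mul_of_fst_ne_zero hx₂ hq (by simpa using congr(star $hbase)) hsnd
    exact ⟨g, hg, hgi, h₁, h₂⟩
  · exact exists_eq_mul_of_fst_ne_zero hx₁ hp hbase hfst

lemma conj_imI {g : ℍ} (hg : ‖g‖ = 1) (hgi : star g * qi * g = qi) (m : ℍ) :
    (star g * m * g).imI = m.imI := by
  have h := inner_star_mul_mul g m qi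
  rwa [hgi, hg, one_pow, one_mul, inner_qi, inner_qi] at h

lemma mul_comm_of_conj_eq {g u : ℍ} (hg : ‖g‖ = 1) (hu : star g * u * g = u) : u * g = g * u := by
  conv_rhs => rw [← hu, ← mul_assoc, ← mul_assoc, self_mul_star_eq, hg]
  simp

lemma eq_one_or_neg_one_of_conj_eq {g : ℍ} (hg : ‖g‖ = 1) (hi : star g * qi * g = qi)
    (hj : star g * qj * g = qj) : g = 1 ∨ g = -1 := by
  have hi' := mul_comm_of_conj_eq hg hi
  have hj' := mul_comm_of_conj_eq hg hj
  simp only [Quaternion.ext_iff, Quaternion.re_mul, Quaternion.imI_mul,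
    Quaternion.imJ_mul, Quaternion.imK_mul, qi_re, qi_imI, qi_imJ, qi_imK, qj_re, qj_imI, qj_imJ,
    qj_imK] at hi' hj'
  have hI : g.imI = 0 := by linarith
  have hJ : g.imJ = 0 := by linarith
  have hK : g.imK = 0 := by linarith
  have hre : g.re ^ 2 = 1 := by simpa [hg, hI, hJ, hK] using (norm_sq_eq g).symm
  rcases sq_eq_one_iff.1 hre with h | h
  · exact .inl (by ext <;> simp [*])
  · exact .inr (by ext <;> simp [*])

/-- Two points with the same image lie on one circle orbit, and `Φ` separates that orbit down to
antipodal pairs. -/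
theorem eq_or_eq_neg_of_perturbedHopf_eq (hΦ : IsNormalMono Φ) {x y : ℍ × ℍ}
    (hx : ‖x.1‖ ^ 2 + ‖x.2‖ ^ 2 = 1) (hy : ‖y.1‖ ^ 2 + ‖y.2‖ ^ 2 = 1)
    (h : perturbedHopf Φ x = perturbedHopf Φ y) : x = y ∨ x = -y := by
  have hdata := hopfData_eq_of_perturbedHopf_eq hΦ (ne_zero_of_sphere hx) (ne_zero_of_sphere hy)
    (hx.trans hy.symm) h
  obtain ⟨g, hg, hgi, h₁, h₂⟩ := exists_eq_mul_of_hopfData_eq (ne_zero_of_sphere hy) hdata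
  have hgj : star g * qj * g = qj := by
    have hΦj : Φ x qj = Φ y qj := congr(($hdata).2.2)
    rw [← Prod.mk.eta (p := x), h₁, h₂, hΦ.equivariant g hg hgi, ← sub_eq_zero, ← map_sub] at hΦj
    refine sub_eq_zero.1 (hΦ.eq_zero y hy _ ?_ ?_ hΦj)
    · rw [Quaternion.re_sub, star_mul_mul_re qj_re, qj_re, sub_self]
    · rw [Quaternion.imI_sub, conj_imI hg hgi, sub_self]
  rcases eq_one_or_neg_one_of_conj_eq hg hgi hgj with rfl | rfl
  · exact .inl (Prod.ext (by simpa using h₁) (by simpa using h₂))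
  · exact .inr (Prod.ext (by simpa using h₁) (by simpa using h₂))

lemma hasLineDerivAt_star_mul (f g : ℍ × ℍ →L[ℝ] ℍ) (x v : ℍ × ℍ) :
    HasLineDerivAt ℝ (fun y => star (f y) * g y) (star (f v) * g x + star (f x) * g v) x v := by
  have h (l : ℍ × ℍ →L[ℝ] ℍ) : HasDerivAt (fun t : ℝ => l (x + t • v)) (l v) 0 := by
    simpa using ((hasDerivAt_id (0 : ℝ)).smul_const (l v)).const_add (l x)
  simpa only [HasLineDerivAt, zero_smul, add_zero] using (h f).star.fun_mul (h g)

lemma exists_eq_smul_qi {η : ℍ} (h : star η * qi + qi * η = 0) : ∃ c : ℝ, η = c • qi := by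
  simp only [Quaternion.ext_iff, Quaternion.re_add, Quaternion.imI_add, Quaternion.imJ_add,
    Quaternion.imK_add, Quaternion.re_mul, Quaternion.imI_mul, Quaternion.imJ_mul,
    Quaternion.imK_mul, Quaternion.re_star, Quaternion.imI_star, Quaternion.imJ_star,
    Quaternion.imK_star, qi_re, qi_imI, qi_imJ, qi_imK, Quaternion.re_zero,
    Quaternion.imI_zero, Quaternion.imJ_zero, Quaternion.imK_zero] at h
  refine ⟨η.imI, ?_⟩
  ext <;> simp <;> linarith

lemma exists_eq_smul_of_fst_ne_zero {p q dp dq : ℍ} (hp : p ≠ 0)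
    (hbase : star dq * p + star q * dp = 0)
    (hfibre : star dp * (qi * p) + star p * (qi * dp) = 0) :
    ∃ c : ℝ, dp = c • (qi * p) ∧ dq = c • (qi * q) := by
  obtain ⟨η, rfl⟩ : ∃ η, dp = η * p := ⟨dp * p⁻¹, by simp [hp]⟩
  have hη : star p * (star η * qi + qi * η) * p = 0 := by
    rw [← hfibre, star_mul]; noncomm_ring
  obtain ⟨c, rfl⟩ := exists_eq_smul_qi (by simpa [hp] using hη)
  refine ⟨c, smul_mul_assoc _ _ _, ?_⟩
  have hq : (star dq + star q * (c • qi)) * p = 0 := by rw [← hbase]; noncomm_ring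
  have hqi : star qi = -qi := by ext <;> simp
  have := congr(star $(eq_neg_of_add_eq_zero_left ((mul_eq_zero.1 hq).resolve_right hp)))
  simpa [hqi] using this

lemma hasLineDerivAt_zero_fst_snd {E F G : Type*} [NormedAddCommGroup E] [NormedSpace ℝ E]
    [NormedAddCommGroup F] [NormedSpace ℝ F] [NormedAddCommGroup G] [NormedSpace ℝ G]
    {f : E → F × G} {x v : E} (h : HasLineDerivAt ℝ f 0 x v) :
    HasLineDerivAt ℝ (fun y => (f y).1) 0 x v ∧ HasLineDerivAt ℝ (fun y => (f y).2) 0 x v :=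
  ⟨by simpa [Function.comp_def] using! hasFDerivAt_fst.comp_hasDerivAt (0 : ℝ) h,
    by simpa [Function.comp_def] using! hasFDerivAt_snd.comp_hasDerivAt (0 : ℝ) h⟩

lemma exists_eq_smul_of_hasLineDerivAt {x v : ℍ × ℍ} (hx : x ≠ 0)
    (h : HasLineDerivAt ℝ (hopfData Φ) 0 x v) : ∃ c : ℝ, v = c • (qi * x.1, qi * x.2) := by
  let P := ContinuousLinearMap.fst ℝ ℍ ℍ
  let Q := ContinuousLinearMap.snd ℝ ℍ ℍ
  let L : ℍ →L[ℝ] ℍ := ContinuousLinearMap.mul ℝ ℍ qi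
  obtain ⟨hS, hrest⟩ := hasLineDerivAt_zero_fst_snd h
  have hbase : star v.2 * x.1 + star x.2 * v.1 = 0 :=
    (hasLineDerivAt_star_mul Q P x v).unique
      (hasLineDerivAt_zero_fst_snd (hasLineDerivAt_zero_fst_snd hS).2).2
  obtain ⟨hfst, hsnd⟩ := hasLineDerivAt_zero_fst_snd (hasLineDerivAt_zero_fst_snd hrest).1
  simp only [hopfData, mul_assoc] at hfst hsnd
  have hfst' := (hasLineDerivAt_star_mul P (L.comp P) x v).unique hfst
  have hsnd' := (hasLineDerivAt_star_mul Q (L.comp Q) x v).unique hsnd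
  by_cases hx₁ : x.1 = 0
  · have hx₂ : x.2 ≠ 0 := fun hx₂ => hx (Prod.ext hx₁ hx₂)
    obtain ⟨c, h₂, h₁⟩ := exists_eq_smul_of_fst_ne_zero hx₂
      (by simpa [P, Q, add_comm] using congr(star $hbase)) hsnd'
    exact ⟨c, Prod.ext h₁ h₂⟩
  · obtain ⟨c, h₁, h₂⟩ := exists_eq_smul_of_fst_ne_zero hx₁ hbase hfst'
    exact ⟨c, Prod.ext h₁ h₂⟩

/-- The circle group `{‖g‖ = 1, ḡ i g = i}`, parametrised by the angle. -/
def circle (θ : ℝ) : ℍ := ⟨Real.cos θ, Real.sin θ, 0, 0⟩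

@[simp] lemma circle_re (θ : ℝ) : (circle θ).re = Real.cos θ := rfl
@[simp] lemma circle_imI (θ : ℝ) : (circle θ).imI = Real.sin θ := rfl
@[simp] lemma circle_imJ (θ : ℝ) : (circle θ).imJ = 0 := rfl
@[simp] lemma circle_imK (θ : ℝ) : (circle θ).imK = 0 := rfl

lemma circle_eq (θ : ℝ) : circle θ = Real.cos θ • (1 : ℍ) + Real.sin θ • qi := by
  ext <;> simp

lemma norm_circle (θ : ℝ) : ‖circle θ‖ = 1 := by
  rw [← sq_eq_sq₀ (norm_nonneg _) zero_le_one, norm_sq_eq]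
  simp

lemma circle_conj_qi (θ : ℝ) : star (circle θ) * qi * circle θ = qi := by
  have h := Real.cos_sq_add_sin_sq θ
  ext <;> simp <;> linarith

lemma hasDerivAt_circle : HasDerivAt circle qi 0 := by
  rw [funext circle_eq]
  simpa using ((Real.hasDerivAt_cos 0).smul_const (1 : ℍ)).fun_add
    ((Real.hasDerivAt_sin 0).smul_const qi)

lemma hasDerivAt_circle_conj_qj :
    HasDerivAt (fun θ => star (circle θ) * qj * circle θ) ((-2 : ℝ) • (qi * qj)) 0 := by
  have h : star qi * qj * circle 0 + star (circle 0) * qj * qi = (-2 : ℝ) • (qi * qj) := by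
    ext <;> norm_num
  exact h ▸ (hasDerivAt_circle.star.mul_const qj).fun_mul hasDerivAt_circle

lemma fderiv_apply_orbit (hΦ : IsNormalMono Φ) {x : ℍ × ℍ}
    (hx : ‖x.1‖ ^ 2 + ‖x.2‖ ^ 2 = 1) :
    fderiv ℝ (fun y => Φ y qj) x (qi * x.1, qi * x.2) = Φ x ((-2 : ℝ) • (qi * qj)) := by
  have hx₀ : (circle 0 * x.1, circle 0 * x.2) = x := by simp [circle_eq]
  have horbit := (hasDerivAt_circle.mul_const x.1).prodMk (hasDerivAt_circle.mul_const x.2)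
  have hdiff : HasFDerivAt (fun y => Φ y qj) (fderiv ℝ (fun y => Φ y qj) x)
      (circle 0 * x.1, circle 0 * x.2) := by
    rw [hx₀]
    exact ((hΦ.contDiffAt x hx).differentiableAt (by simp)).hasFDerivAt
  have h₁ : HasDerivAt (fun θ => Φ (circle θ * x.1, circle θ * x.2) qj)
      (fderiv ℝ (fun y => Φ y qj) x (qi * x.1, qi * x.2)) 0 :=
    hdiff.comp_hasDerivAt (f := fun θ => (circle θ * x.1, circle θ * x.2)) 0 horbit
  simp only [hΦ.equivariant _ (norm_circle _) (circle_conj_qi _)] at h₁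
  exact h₁.unique ((Φ x).toContinuousLinearMap.hasFDerivAt.comp_hasDerivAt (0 : ℝ)
    hasDerivAt_circle_conj_qj)

/-- An infinitesimal motion killing the unperturbed invariants is tangent to the circle orbit, and
there the derivative of the displacement is detected by `Φ`. -/
theorem eq_zero_of_hasLineDerivAt_perturbedHopf (hΦ : IsNormalMono Φ) {x v : ℍ × ℍ}
    (hx : ‖x.1‖ ^ 2 + ‖x.2‖ ^ 2 = 1)
    (h : HasLineDerivAt ℝ (codeWithRadius Φ) 0 x v) : v = 0 := by
  have hx₀ := ne_zero_of_sphere hx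
  have hdata := hasLineDerivAt_hopfData hΦ hx₀ h
  obtain ⟨c, rfl⟩ := exists_eq_smul_of_hasLineDerivAt hx₀ hdata
  have hzero : Φ x (c • (-2 : ℝ) • (qi * qj)) = 0 := by
    rw [map_smul, ← fderiv_apply_orbit hΦ hx, ← map_smul]
    exact (((hΦ.contDiffAt x hx).differentiableAt (by simp)).hasFDerivAt.hasLineDerivAt _).unique
      (hasLineDerivAt_zero_fst_snd (hasLineDerivAt_zero_fst_snd hdata).2).2
  have hc := congr(($(hΦ.eq_zero x hx _ (by simp) (by simp) hzero)).imK)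
  simp only [Quaternion.imK_smul, Quaternion.imK_mul, Quaternion.imK_zero] at hc
  simp at hc
  simp [hc]

lemma contDiffAt_perturbedHopf (hΦ : IsNormalMono Φ) {x : ℍ × ℍ}
    (hx : ‖x.1‖ ^ 2 + ‖x.2‖ ^ 2 = 1) : ContDiffAt ℝ ∞ (perturbedHopf Φ) x := by
  have h := hΦ.contDiffAt x hx
  unfold perturbedHopf
  fun_prop

lemma perturbedHopf_neg (hΦ : IsNormalMono Φ) (x : ℍ × ℍ) :
    perturbedHopf Φ (-x) = perturbedHopf Φ x := by
  have h : Φ (-x) qj = Φ x qj := by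
    have := hΦ.equivariant (-1) (by simp) (by simp) x qj
    simpa only [neg_one_mul, star_neg, star_one, neg_mul, mul_neg, mul_one, one_mul, neg_neg]
  simp [perturbedHopf, h]

lemma perturbedHopf_re (hΦ : IsNormalMono Φ) (x : ℍ × ℍ) :
    (perturbedHopf Φ x).2.2.1.re = 0 ∧ (perturbedHopf Φ x).2.2.2.re = 0 := by
  obtain ⟨h₁, h₂⟩ := hΦ.re_eq_zero x qj qj_re
  simp only [perturbedHopf, Quaternion.re_add, Quaternion.re_smul, h₁, h₂,
    star_mul_mul_re qi_re, smul_zero, add_zero, and_self]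

end Embedding

section Reflection

variable {E : Type*} [NormedAddCommGroup E] [InnerProductSpace ℝ E]

/-- A linear isometry taking the direction of `u` to the unit vector `e₁`, in two reflections
passing through the direction of `e`. It depends smoothly on `u` and `e` as long as `e` is on
neither of the rays of `u` and `e₁`. -/
def alignVia (e₁ e u : E) : E ≃ₗᵢ[ℝ] E :=
  (ℝ ∙ (‖e‖ • u - ‖u‖ • e))ᗮ.reflection.trans (ℝ ∙ (e - ‖e‖ • e₁))ᗮ.reflection

lemma alignVia_smul {e₁ : E} (he₁ : ‖e₁‖ = 1) (e u : E) :
    alignVia e₁ e u (‖e‖ • u) = (‖u‖ * ‖e‖) • e₁ := by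
  have h₁ : (ℝ ∙ (‖e‖ • u - ‖u‖ • e))ᗮ.reflection (‖e‖ • u) = ‖u‖ • e :=
    Submodule.reflection_sub (by simp only [norm_smul, norm_norm, mul_comm])
  have h₂ : (ℝ ∙ (e - ‖e‖ • e₁))ᗮ.reflection e = ‖e‖ • e₁ :=
    Submodule.reflection_sub (by simp [norm_smul, he₁])
  rw [alignVia, LinearIsometryEquiv.trans_apply, h₁, map_smul, h₂, smul_smul]

lemma inner_alignVia_eq_zero {e₁ e u v : E} (he₁ : ‖e₁‖ = 1) (he : e ≠ 0) (hu : u ≠ 0)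
    (huv : ⟪u, v⟫ = 0) : ⟪e₁, alignVia e₁ e u v⟫ = 0 := by
  have h := (alignVia e₁ e u).inner_map_map (‖e‖ • u) v
  rw [alignVia_smul he₁, inner_smul_left, inner_smul_left, huv] at h
  simpa [he, hu] using h

lemma alignVia_neg_apply {e₁ u v : E} (he₁ : ⟪e₁, v⟫ = 0) (huv : ⟪u, v⟫ = 0) :
    alignVia e₁ (-u) u v = v := by
  have reflection_fix {w : E} (hw : ⟪w, v⟫ = 0) : (ℝ ∙ w)ᗮ.reflection v = v :=
    Submodule.reflection_mem_subspace_eq_self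
      (Submodule.mem_orthogonal_singleton_iff_inner_right.2 hw)
  rw [alignVia, LinearIsometryEquiv.trans_apply, reflection_fix, reflection_fix]
  · simp [inner_sub_left, inner_smul_left, he₁, huv]
  · simp [inner_add_left, inner_smul_left, huv]

lemma reflection_orthogonal_singleton_apply (w y : E) :
    (ℝ ∙ w)ᗮ.reflection y = y - (2 * (⟪w, y⟫ / ‖w‖ ^ 2)) • w := by
  rw [Submodule.reflection_orthogonal_apply, Submodule.reflection_singleton_apply]
  simp [mul_smul, two_smul]

variable {F : Type*} [NormedAddCommGroup F] [NormedSpace ℝ F] {n : WithTop ℕ∞}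

lemma contDiffAt_reflection {w y : F → E} {x : F} (hw : ContDiffAt ℝ n w x)
    (hy : ContDiffAt ℝ n y x) (h : w x ≠ 0) :
    ContDiffAt ℝ n (fun z => (ℝ ∙ w z)ᗮ.reflection (y z)) x := by
  simp only [reflection_orthogonal_singleton_apply]
  exact hy.sub
    ((contDiffAt_const.mul ((hw.inner ℝ hy).div (hw.norm_sq ℝ) (by simpa using h))).smul hw)

lemma contDiffAt_alignVia {e₁ : E} (he₁ : ‖e₁‖ = 1) {e u v : F → E} {x : F}
    (he : ContDiffAt ℝ n e x) (hu : ContDiffAt ℝ n u x) (hv : ContDiffAt ℝ n v x)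
    (heu : ¬SameRay ℝ (e x) (u x)) (hee₁ : ¬SameRay ℝ (e x) e₁) :
    ContDiffAt ℝ n (fun z => alignVia e₁ (e z) (u z) (v z)) x := by
  have he₀ : e x ≠ 0 := fun h => heu (h ▸ SameRay.zero_left _)
  have hu₀ : u x ≠ 0 := fun h => heu (h ▸ SameRay.zero_right _)
  rw [sameRay_iff_norm_smul_eq] at heu hee₁
  rw [he₁, one_smul] at hee₁
  exact contDiffAt_reflection (he.sub ((he.norm ℝ he₀).smul contDiffAt_const))
    (contDiffAt_reflection (((he.norm ℝ he₀).smul hu).sub ((hu.norm ℝ hu₀).smul he)) hv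
      (sub_ne_zero.2 heu)) (sub_ne_zero.2 (Ne.symm hee₁))

end Reflection

section Direction

/-- The imaginary parts of a pair of quaternions, as a vector of `ℝ⁶`. -/
def imPair : ℍ × ℍ →ₗ[ℝ] EuclideanSpace ℝ (Fin 6) where
  toFun x := !₂[x.1.imI, x.1.imJ, x.1.imK, x.2.imI, x.2.imJ, x.2.imK]
  map_add' x y := by ext i; fin_cases i <;> simp
  map_smul' r x := by ext i; fin_cases i <;> simp

lemma imPair_inj {x y : ℍ × ℍ} : imPair x = imPair y ↔
    (x.1.imI = y.1.imI ∧ x.1.imJ = y.1.imJ ∧ x.1.imK = y.1.imK) ∧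
      x.2.imI = y.2.imI ∧ x.2.imJ = y.2.imJ ∧ x.2.imK = y.2.imK := by
  simp [imPair, and_assoc]

lemma inner_imPair {x : ℍ × ℍ} (h₁ : x.1.re = 0) (h₂ : x.2.re = 0) (y : ℍ × ℍ) :
    ⟪imPair x, imPair y⟫ = ⟪x.1, y.1⟫ + ⟪x.2, y.2⟫ := by
  simp [imPair, PiLp.inner_apply, Fin.sum_univ_succ, Quaternion.inner_def, h₁, h₂]
  ring

lemma imPair_injOn {x y : ℍ × ℍ} (h₁ : x.1.re = y.1.re) (h₂ : x.2.re = y.2.re)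
    (h : imPair x = imPair y) : x = y := by
  obtain ⟨⟨hI, hJ, hK⟩, hI', hJ', hK'⟩ := imPair_inj.1 h
  exact Prod.ext (Quaternion.ext _ _ h₁ hI hJ hK) (Quaternion.ext _ _ h₂ hI' hJ' hK')

/-- The first unit vector of `ℝ⁶`. -/
def baseVec : EuclideanSpace ℝ (Fin 6) := imPair (qi, 0)

lemma norm_baseVec : ‖baseVec‖ = 1 := by
  rw [← sq_eq_sq₀ (norm_nonneg _) zero_le_one, ← real_inner_self_eq_norm_sq, baseVec,
    inner_imPair rfl rfl]
  simp [norm_qi]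

/-- For `a = z + w` with `z ∈ ℂ` and `w ∈ ℂj`, the homotopy from `a²` to `z² + iw`, both of which
vanish only at the origin. -/
def squareHomotopy (σ : ℝ) (a : ℍ) : ℍ :=
  (1 - σ) • (a * a) + σ • (quat a.re a.imI 0 0 * quat a.re a.imI 0 0 + qi * quat 0 0 a.imJ a.imK)

lemma eq_zero_of_sq_add_sq_eq_zero {x y : ℝ} (h : x ^ 2 + y ^ 2 = 0) : x = 0 ∧ y = 0 :=
  ⟨by nlinarith [sq_nonneg x, sq_nonneg y], by nlinarith [sq_nonneg x, sq_nonneg y]⟩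

lemma squareHomotopy_ne_zero (σ : ℝ) {a : ℍ} (ha : a ≠ 0) : squareHomotopy σ a ≠ 0 := by
  contrapose! ha
  have hre : a.re ^ 2 - a.imI ^ 2 - (1 - σ) * (a.imJ ^ 2 + a.imK ^ 2) = 0 := by
    have h := congr(($ha).re)
    simp [squareHomotopy] at h
    linarith
  have hI : 2 * a.re * a.imI = 0 := by
    have h := congr(($ha).imI)
    simp [squareHomotopy] at h
    linarith
  have hJ : 2 * (1 - σ) * a.re * a.imJ - σ * a.imK = 0 := by
    have h := congr(($ha).imJ)
    simp [squareHomotopy] at h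
    linarith
  have hK : 2 * (1 - σ) * a.re * a.imK + σ * a.imJ = 0 := by
    have h := congr(($ha).imK)
    simp [squareHomotopy] at h
    linarith
  have hw : ((2 * (1 - σ) * a.re) ^ 2 + σ ^ 2) * (a.imJ ^ 2 + a.imK ^ 2) = 0 := by
    linear_combination (2 * (1 - σ) * a.re * a.imJ - σ * a.imK) * hJ +
      (2 * (1 - σ) * a.re * a.imK + σ * a.imJ) * hK
  rcases mul_eq_zero.1 hw with hσ | hJK
  · obtain ⟨h, rfl⟩ := eq_zero_of_sq_add_sq_eq_zero hσ
    have h₀ : a.re = 0 := by simpa using h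
    rw [h₀] at hre
    refine Quaternion.ext _ _ h₀ ?_ ?_ ?_ <;> simp only [Quaternion.imI_zero, Quaternion.imJ_zero,
      Quaternion.imK_zero] <;> nlinarith [sq_nonneg a.imI, sq_nonneg a.imJ, sq_nonneg a.imK]
  · obtain ⟨hJ', hK'⟩ := eq_zero_of_sq_add_sq_eq_zero hJK
    rw [hJ', hK'] at hre
    have hz : a.re ^ 2 + a.imI ^ 2 = 0 := by
      refine pow_eq_zero_iff two_ne_zero |>.1 ?_
      linear_combination (a.re ^ 2 - a.imI ^ 2) * hre + 2 * a.re * a.imI * hI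
    obtain ⟨hre', hI'⟩ := eq_zero_of_sq_add_sq_eq_zero hz
    exact Quaternion.ext _ _ hre' hI' hJ' hK'

/-- The conformal embedding of `Im ℍ` in `ℝ⁶ = Im ℍ ⊕ Im ℍ` interpolating between `v ↦ (0, c v c̄)`
at `σ = 0` and `v ↦ (v, 0)` at `σ = 1`. -/
def conformalEmb (σ : ℝ) (c : ℍ) : ℍ →ₗ[ℝ] EuclideanSpace ℝ (Fin 6) :=
  imPair ∘ₗ (σ • LinearMap.id).prod ((1 - σ) • LinearMap.mulLeftRight ℝ (c, star c))

lemma conformalEmb_apply (σ : ℝ) (c v : ℍ) :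
    conformalEmb σ c v = imPair (σ • v, (1 - σ) • (c * v * star c)) := rfl

lemma inner_conformalEmb {u : ℍ} (hu : u.re = 0) (σ : ℝ) (c v : ℍ) :
    ⟪conformalEmb σ c u, conformalEmb σ c v⟫ = (σ ^ 2 + (1 - σ) ^ 2 * ‖c‖ ^ 4) * ⟪u, v⟫ := by
  rw [conformalEmb_apply, conformalEmb_apply, inner_imPair (by simp [hu])
    (by rw [Quaternion.re_smul, mul_mul_star_re hu, smul_zero])]
  simp only [inner_smul_left, inner_smul_right, inner_mul_mul_star, conj_trivial]
  ring

/-- A quadratic twist of the imaginary unit `u`, which for `κ > 0` vanishes only if `u = ±i` and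
`a ∈ ℂ`. -/
def twist (κ : ℝ) (a u : ℍ) : ℍ :=
  quat a.re a.imI κ 0 * quat (-2 * u.imI * a.imJ) (-2 * u.imI * a.imK) (-u.imJ) (-u.imK) *
    quat a.re a.imI κ 0

/-- A function of `u` without zeros on the half-sphere `u.imI ≤ 0` where `twist κ a u = 0`. -/
def defect (κ : ℝ) (a u : ℍ) : ℝ :=
  -u.imI * ((a.re ^ 2 + a.imI ^ 2) ^ 2 - (a.imJ ^ 2 + a.imK ^ 2)) - 1 / 100 - 2 / 100 * κ * u.imI

/-- The pair of imaginary quaternions whose direction is used by `alignVia`. As `(σ, t, κ)` runs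
from `(0, 0, 0)` to `(1, 1, 1)`, it deforms `(0, -a² u ā²)` to a field that is defined
for `a = 0`. -/
def directionPair (σ t κ : ℝ) (a u : ℍ) : ℍ × ℍ :=
  (quat 0 (-σ * u.imI) (t * (twist κ a u).imJ) (t * (twist κ a u).imK),
    t • quat 0 (defect κ a u) (twist κ a u).re (twist κ a u).imI -
      (1 - t) • (squareHomotopy σ a * u * star (squareHomotopy σ a)))

/-- The parameters for which `directionPair` avoids the rays of `baseVec` and of `conformalEmb`. -/
inductive Admissible : ℝ → ℝ → ℝ → ℍ → Prop
  | first {σ κ a} (h₀ : 0 ≤ σ) (h₁ : σ ≤ 1) (ha : a ≠ 0) : Admissible σ 0 κ a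
  | second {t a} (h₀ : 0 < t) (h₁ : t ≤ 1) (ha : 1 / 10 < ‖a‖ ^ 2) : Admissible 1 t 0 a
  | third {κ a} (h₀ : 0 ≤ κ) (h₁ : κ ≤ 1) (ha : κ = 1 ∨ 1 / 10 < ‖a‖ ^ 2) : Admissible 1 1 κ a

lemma directionPair_re {u : ℍ} (hu : u.re = 0) (σ t κ : ℝ) (a : ℍ) :
    (directionPair σ t κ a u).1.re = 0 ∧ (directionPair σ t κ a u).2.re = 0 := by
  simp only [directionPair, Quaternion.re_sub, Quaternion.re_smul, mul_mul_star_re hu]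
  simp

lemma mul_mul_star_ne_zero {c u : ℍ} (hc : c ≠ 0) (hu : u ≠ 0) : c * u * star c ≠ 0 := by
  simp [hc, hu]

lemma eq_neg_qi {u : ℍ} (hu : u.re = 0) (hn : ‖u‖ = 1) (hI : u.imI ≤ 0) (hJ : u.imJ = 0)
    (hK : u.imK = 0) : u = -qi := by
  have h := norm_sq_eq u
  rw [hn, hu, hJ, hK] at h
  have hI' : u.imI = -1 := by nlinarith
  ext <;> simp [hu, hI', hJ, hK]

lemma defect_ne_zero_of_twist_eq_zero {κ : ℝ} {a u : ℍ} (hκ₀ : 0 ≤ κ) (hκ₁ : κ ≤ 1)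
    (ha : κ = 1 ∨ 1 / 10 < ‖a‖ ^ 2) (hu : u.re = 0) (hn : ‖u‖ = 1) (hI : u.imI ≤ 0)
    (hg : twist κ a u = 0) : defect κ a u ≠ 0 := by
  intro h
  rw [norm_sq_eq] at ha
  by_cases hζ : quat a.re a.imI κ 0 = 0
  · have h₁ : a.re = 0 := congr(($hζ).re)
    have h₂ : a.imI = 0 := congr(($hζ).imI)
    have h₃ : κ = 0 := congr(($hζ).imJ)
    rw [defect, h₁, h₂, h₃] at h
    nlinarith [mul_nonneg (neg_nonneg.2 hI) (add_nonneg (sq_nonneg a.imJ) (sq_nonneg a.imK))]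
  · have hy := ((mul_eq_zero.1 hg).resolve_right hζ |> mul_eq_zero.1).resolve_left hζ
    obtain rfl :=
      eq_neg_qi hu hn hI (neg_eq_zero.1 congr(($hy).imJ)) (neg_eq_zero.1 congr(($hy).imK))
    have hJ : a.imJ = 0 := by simpa using congr(($hy).re)
    have hK : a.imK = 0 := by simpa using congr(($hy).imI)
    simp only [defect, hJ, hK, Quaternion.imI_neg, qi_imI] at h
    rw [hJ, hK] at ha
    rcases ha with rfl | ha
    · nlinarith [sq_nonneg (a.re ^ 2 + a.imI ^ 2)]
    · nlinarith

lemma twist_zero_imJ_imK (a u : ℍ) :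
    (twist 0 a u).imJ = -((a.re ^ 2 + a.imI ^ 2) * u.imJ) ∧
      (twist 0 a u).imK = -((a.re ^ 2 + a.imI ^ 2) * u.imK) := by
  constructor <;> simp [twist] <;> ring

lemma directionPair_snd_imI {a u : ℍ} (hre : a.re = 0) (hI : a.imI = 0) (t : ℝ) :
    (directionPair 1 t 0 a u).2.imI = u.imI * (a.imJ ^ 2 + a.imK ^ 2) - t / 100 := by
  simp [directionPair, squareHomotopy, defect, hre, hI]
  ring

lemma directionPair_snd_neg_qi (t : ℝ) (a : ℍ) :
    (directionPair 1 t 0 a (-qi)).2 =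
      quat 0 ((a.re ^ 2 + a.imI ^ 2) ^ 2 - (a.imJ ^ 2 + a.imK ^ 2) - t / 100)
        (2 * ((a.re ^ 2 - a.imI ^ 2) * a.imJ - 2 * a.re * a.imI * a.imK))
        (2 * ((a.re ^ 2 - a.imI ^ 2) * a.imK + 2 * a.re * a.imI * a.imJ)) := by
  refine Quaternion.ext _ _ (directionPair_re (by simp) 1 t 0 a).2 ?_ ?_ ?_ <;>
    simp [directionPair, squareHomotopy, defect, twist] <;> ring

lemma directionPair_snd_neg_qi_ne_zero {t : ℝ} {a : ℍ} (ht : t ≤ 1) (ha : 1 / 10 < ‖a‖ ^ 2)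
    (hz : a.re ^ 2 + a.imI ^ 2 ≠ 0) : (directionPair 1 t 0 a (-qi)).2 ≠ 0 := by
  rw [directionPair_snd_neg_qi]
  intro h
  have hi : (a.re ^ 2 + a.imI ^ 2) ^ 2 - (a.imJ ^ 2 + a.imK ^ 2) - t / 100 = 0 := congr(($h).imI)
  have hj : 2 * ((a.re ^ 2 - a.imI ^ 2) * a.imJ - 2 * a.re * a.imI * a.imK) = 0 := congr(($h).imJ)
  have hk : 2 * ((a.re ^ 2 - a.imI ^ 2) * a.imK + 2 * a.re * a.imI * a.imJ) = 0 := congr(($h).imK)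
  have hw : (a.re ^ 2 + a.imI ^ 2) ^ 2 * (a.imJ ^ 2 + a.imK ^ 2) = 0 := by
    linear_combination ((a.re ^ 2 - a.imI ^ 2) * a.imJ - 2 * a.re * a.imI * a.imK) / 2 * hj +
      ((a.re ^ 2 - a.imI ^ 2) * a.imK + 2 * a.re * a.imI * a.imJ) / 2 * hk
  obtain ⟨hJ, hK⟩ :=
    eq_zero_of_sq_add_sq_eq_zero ((mul_eq_zero.1 hw).resolve_left (pow_ne_zero 2 hz))
  rw [norm_sq_eq] at ha
  rw [hJ, hK] at hi ha
  nlinarith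

lemma directionPair_snd_ne_zero {t : ℝ} {a u : ℍ} (ht₀ : 0 < t) (ht₁ : t ≤ 1)
    (ha : 1 / 10 < ‖a‖ ^ 2) (hu : u.re = 0) (hn : ‖u‖ = 1) (hI : u.imI ≤ 0)
    (hJ : (twist 0 a u).imJ = 0) (hK : (twist 0 a u).imK = 0) :
    (directionPair 1 t 0 a u).2 ≠ 0 := by
  by_cases hz : a.re ^ 2 + a.imI ^ 2 = 0
  · obtain ⟨hre, hi⟩ := eq_zero_of_sq_add_sq_eq_zero hz
    intro h
    have h' := directionPair_snd_imI (u := u) hre hi t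
    rw [h, Quaternion.imI_zero] at h'
    nlinarith [mul_nonneg (neg_nonneg.2 hI) (add_nonneg (sq_nonneg a.imJ) (sq_nonneg a.imK))]
  · rw [(twist_zero_imJ_imK a u).1, neg_eq_zero, mul_eq_zero_iff_left hz] at hJ
    rw [(twist_zero_imJ_imK a u).2, neg_eq_zero, mul_eq_zero_iff_left hz] at hK
    obtain rfl := eq_neg_qi hu hn hI hJ hK
    exact directionPair_snd_neg_qi_ne_zero ht₁ ha hz

/-- The vector of `ℝ⁶` whose direction is used by `alignVia`. -/
def direction (σ t κ : ℝ) (a u : ℍ) : EuclideanSpace ℝ (Fin 6) :=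
  imPair (directionPair σ t κ a u)

lemma directionPair_zero_snd (σ κ : ℝ) (a u : ℍ) : (directionPair σ 0 κ a u).2 =
    -(squareHomotopy σ a * u * star (squareHomotopy σ a)) := by
  simp [directionPair]

lemma directionPair_one_snd (σ κ : ℝ) (a u : ℍ) : (directionPair σ 1 κ a u).2 =
    quat 0 (defect κ a u) (twist κ a u).re (twist κ a u).imI := by
  simp [directionPair]

lemma norm_conformalEmb_sq {u : ℍ} (hu : u.re = 0) (σ : ℝ) (c : ℍ) :
    ‖conformalEmb σ c u‖ ^ 2 = (σ ^ 2 + (1 - σ) ^ 2 * ‖c‖ ^ 4) * ‖u‖ ^ 2 := by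
  rw [← real_inner_self_eq_norm_sq, inner_conformalEmb hu, real_inner_self_eq_norm_sq]

lemma conformalEmb_ne_zero {σ : ℝ} {c u : ℍ} (h : σ ≠ 0 ∨ c ≠ 0) (hu : u.re = 0) (hu₀ : u ≠ 0) :
    conformalEmb σ c u ≠ 0 := by
  rw [← norm_ne_zero_iff, ← sq_pos_iff, norm_conformalEmb_sq hu]
  refine mul_pos ?_ (by positivity)
  rcases eq_or_ne σ 0 with rfl | hσ
  · have hc := h.resolve_left (not_not.2 rfl)
    simp only [sub_zero]
    positivity
  · positivity

lemma Admissible.ne_zero {σ t κ : ℝ} {a : ℍ} (h : Admissible σ t κ a) : σ ≠ 0 ∨ a ≠ 0 := by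
  cases h with
  | first _ _ ha => exact Or.inr ha
  | _ => exact Or.inl one_ne_zero

lemma not_sameRay_direction_baseVec {σ t κ : ℝ} {a u : ℍ} (h : Admissible σ t κ a) (hu : u.re = 0)
    (hn : ‖u‖ = 1) : ¬SameRay ℝ (direction σ t κ a u) baseVec := by
  intro hray
  have hb : baseVec ≠ 0 := fun h => by simpa [h] using norm_baseVec
  have hu₀ : u ≠ 0 := by rintro rfl; simp at hn
  obtain ⟨l, hl, he⟩ := hray.exists_nonneg_right hb
  rw [direction, baseVec, ← map_smul, Prod.smul_mk, smul_zero] at he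
  have hpair := imPair_injOn (by simp [(directionPair_re hu σ t κ a).1])
    (directionPair_re hu σ t κ a).2 he
  have hI : -σ * u.imI = l := congr(($hpair).1.imI).trans (by simp)
  have hJ : t * (twist κ a u).imJ = 0 := congr(($hpair).1.imJ).trans (by simp)
  have hK : t * (twist κ a u).imK = 0 := congr(($hpair).1.imK).trans (by simp)
  have hsnd : (directionPair σ t κ a u).2 = 0 := congr(($hpair).2)
  cases h with
  | first _ _ ha =>
    rw [directionPair_zero_snd, neg_eq_zero] at hsnd
    exact mul_mul_star_ne_zero (squareHomotopy_ne_zero σ ha) hu₀ hsnd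
  | second ht₀ ht₁ ha =>
    exact directionPair_snd_ne_zero ht₀ ht₁ ha hu hn (by linarith)
      ((mul_eq_zero_iff_left ht₀.ne').1 hJ) ((mul_eq_zero_iff_left ht₀.ne').1 hK) hsnd
  | third hκ₀ hκ₁ ha =>
    rw [directionPair_one_snd] at hsnd
    refine defect_ne_zero_of_twist_eq_zero hκ₀ hκ₁ ha hu hn (by linarith) ?_ congr(($hsnd).imI)
    exact Quaternion.ext _ _ congr(($hsnd).imJ) congr(($hsnd).imK) (by simpa using hJ)
      (by simpa using hK)

lemma not_sameRay_direction_conformalEmb {σ t κ : ℝ} {a u : ℍ} (h : Admissible σ t κ a)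
    (hu : u.re = 0) (hn : ‖u‖ = 1) :
    ¬SameRay ℝ (direction σ t κ a u) (conformalEmb σ (squareHomotopy σ a) u) := by
  intro hray
  have hu₀ : u ≠ 0 := by rintro rfl; simp at hn
  have he₀ : direction σ t κ a u ≠ 0 := fun h₀ =>
    not_sameRay_direction_baseVec h hu hn (h₀ ▸ SameRay.zero_left _)
  obtain ⟨l, hl, he⟩ := hray.exists_nonneg_right (conformalEmb_ne_zero
    (h.ne_zero.imp_right (squareHomotopy_ne_zero σ)) hu hu₀)
  have hl₀ : l ≠ 0 := fun h₀ => he₀ (by rw [he, h₀, zero_smul])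
  rw [direction, conformalEmb_apply, ← map_smul, Prod.smul_mk] at he
  have hpair := imPair_injOn (by simp [(directionPair_re hu σ t κ a).1, hu])
    (by simp only [(directionPair_re hu σ t κ a).2, Quaternion.re_smul, mul_mul_star_re hu,
      smul_zero]) he
  have hI : -σ * u.imI = l * (σ * u.imI) := congr(($hpair).1.imI)
  have hJ : t * (twist κ a u).imJ = l * (σ * u.imJ) := congr(($hpair).1.imJ)
  have hK : t * (twist κ a u).imK = l * (σ * u.imK) := congr(($hpair).1.imK)
  have hsnd : (directionPair σ t κ a u).2 = l • (1 - σ) •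
    (squareHomotopy σ a * u * star (squareHomotopy σ a)) := congr(($hpair).2)
  cases h with
  | @first σ κ a _ hσ ha =>
    rw [directionPair_zero_snd, smul_smul, neg_eq_iff_add_eq_zero, ← one_smul ℝ (_ * _), smul_smul,
      ← add_smul] at hsnd
    exact smul_ne_zero (by nlinarith [mul_nonneg hl (sub_nonneg.2 hσ)])
      (mul_mul_star_ne_zero (squareHomotopy_ne_zero σ ha) hu₀) hsnd
  | @second t a ht₀ ht₁ ha =>
    rw [(twist_zero_imJ_imK a u).1] at hJ
    rw [(twist_zero_imJ_imK a u).2] at hK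
    have hpos : t * (a.re ^ 2 + a.imI ^ 2) + l ≠ 0 := by positivity
    have hI' : u.imI = 0 := by nlinarith
    have hJ' : u.imJ = 0 := (mul_eq_zero_iff_left hpos).1 (by linarith)
    have hK' : u.imK = 0 := (mul_eq_zero_iff_left hpos).1 (by linarith)
    exact hu₀ (Quaternion.ext _ _ hu hI' hJ' hK')
  | @third κ a hκ₀ hκ₁ ha =>
    have hI' : u.imI = 0 := by nlinarith
    have hr : defect κ a u = 0 := by
      simpa using (directionPair_one_snd 1 κ a u ▸ congr(($hsnd).imI) :)
    norm_num [defect, hI'] at hr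

variable {F : Type*} [NormedAddCommGroup F] [NormedSpace ℝ F] {n : WithTop ℕ∞} {x : F}

@[fun_prop]
lemma contDiffAt_imPair {f : F → ℍ × ℍ} (hf : ContDiffAt ℝ n f x) :
    ContDiffAt ℝ n (fun y => imPair (f y)) x :=
  imPair.toContinuousLinearMap.contDiff.contDiffAt.comp x hf

@[fun_prop]
lemma contDiffAt_squareHomotopy {σ : F → ℝ} {a : F → ℍ} (hσ : ContDiffAt ℝ n σ x)
    (ha : ContDiffAt ℝ n a x) : ContDiffAt ℝ n (fun y => squareHomotopy (σ y) (a y)) x := by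
  unfold squareHomotopy
  fun_prop

lemma contDiffAt_conformalEmb {σ : F → ℝ} {c v : F → ℍ} (hσ : ContDiffAt ℝ n σ x)
    (hc : ContDiffAt ℝ n c x) (hv : ContDiffAt ℝ n v x) :
    ContDiffAt ℝ n (fun y => conformalEmb (σ y) (c y) (v y)) x := by
  simp only [conformalEmb_apply]
  fun_prop

lemma contDiffAt_direction {σ t κ : F → ℝ} {a u : F → ℍ} (hσ : ContDiffAt ℝ n σ x)
    (ht : ContDiffAt ℝ n t x) (hκ : ContDiffAt ℝ n κ x) (ha : ContDiffAt ℝ n a x)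
    (hu : ContDiffAt ℝ n u x) :
    ContDiffAt ℝ n (fun y => direction (σ y) (t y) (κ y) (a y) (u y)) x := by
  unfold direction directionPair twist defect
  fun_prop

end Direction

section NormalMono

/-- The conjugation `m ↦ p⁻¹ m p`. -/
def invConj (p : ℍ) : ℍ →ₗ[ℝ] ℍ := (‖p‖ ^ 2)⁻¹ • LinearMap.mulLeftRight ℝ (star p, p)

lemma invConj_apply (p m : ℍ) : invConj p m = (‖p‖ ^ 2)⁻¹ • (star p * m * p) := rfl

lemma invConj_mul {g : ℍ} (hg : ‖g‖ = 1) (p m : ℍ) :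
    invConj (g * p) m = invConj p (star g * m * g) := by
  simp only [invConj_apply, norm_mul, hg, one_mul, conj_conj]

lemma invConj_re (p : ℍ) {m : ℍ} (hm : m.re = 0) : (invConj p m).re = 0 := by
  rw [invConj_apply, Quaternion.re_smul, star_mul_mul_re hm, smul_zero]

lemma inner_invConj {p : ℍ} (hp : p ≠ 0) (u v : ℍ) : ⟪invConj p u, invConj p v⟫ = ⟪u, v⟫ := by
  have := norm_ne_zero_iff.2 hp
  simp only [invConj_apply, inner_smul_left, inner_smul_right, inner_star_mul_mul, conj_trivial]
  field_simp

lemma norm_invConj {p : ℍ} (hp : p ≠ 0) (u : ℍ) : ‖invConj p u‖ = ‖u‖ := by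
  rw [norm_eq_sqrt_real_inner, inner_invConj hp, ← norm_eq_sqrt_real_inner]

lemma star_mul_mul_mul {g : ℍ} (hg : ‖g‖ = 1) (p q : ℍ) : star (g * q) * (g * p) = star q * p := by
  rw [star_mul, mul_assoc, ← mul_assoc (star g), star_mul_self_eq, hg]
  simp

/-- A smooth cutoff in `ρ = ‖q‖²`, equal to `1` for `ρ ≤ (k - 1) / 10` and to `0` for
`ρ ≥ k / 10`. -/
def cutoff (k ρ : ℝ) : ℝ := Real.smoothTransition (k - 10 * ρ)

lemma cutoff_eq_one {k ρ : ℝ} (h : 10 * ρ ≤ k - 1) : cutoff k ρ = 1 :=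
  Real.smoothTransition.one_of_one_le (by linarith)

lemma cutoff_eq_zero {k ρ : ℝ} (h : k ≤ 10 * ρ) : cutoff k ρ = 0 :=
  Real.smoothTransition.zero_of_nonpos (by linarith)

lemma admissible_cutoff {ρ : ℝ} {a : ℍ} (h₀ : 0 ≤ ρ) (h₁ : ρ < 3 / 5)
    (ha : ‖a‖ ^ 2 = ρ * (1 - ρ)) :
    Admissible (cutoff 5 ρ) (cutoff 4 ρ) (cutoff 3 ρ) a := by
  have ha' (h : 1 / 5 ≤ ρ) : 1 / 10 < ‖a‖ ^ 2 := by nlinarith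
  rcases le_or_gt (2 / 5) ρ with h | h
  · rw [cutoff_eq_zero (k := 4) (by linarith)]
    refine .first (Real.smoothTransition.nonneg _) (Real.smoothTransition.le_one _) ?_
    rintro rfl
    norm_num at ha'
    linarith
  rw [cutoff_eq_one (k := 5) (by linarith)]
  rcases le_or_gt (3 / 10) ρ with h' | h'
  · rw [cutoff_eq_zero (k := 3) (by linarith)]
    exact .second (Real.smoothTransition.pos_of_pos (by linarith))
      (Real.smoothTransition.le_one _) (ha' (by linarith))
  · rw [cutoff_eq_one (k := 4) (by linarith)]
    refine .third (Real.smoothTransition.nonneg _) (Real.smoothTransition.le_one _) ?_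
    exact (le_or_gt (1 / 5) ρ).symm.imp (fun h => cutoff_eq_one (by linarith)) ha'

/-- The embedding of `Im ℍ` in `ℝ⁶` at the point `x`, in the trivialisation given by `x.1`. -/
def innerEmb (x : ℍ × ℍ) : ℍ →ₗ[ℝ] EuclideanSpace ℝ (Fin 6) :=
  conformalEmb (cutoff 5 (‖x.2‖ ^ 2)) (squareHomotopy (cutoff 5 (‖x.2‖ ^ 2)) (star x.2 * x.1)) ∘ₗ
    invConj x.1

/-- The direction through which `innerEmb x qi` is aligned with `baseVec`. -/
def innerDir (x : ℍ × ℍ) : EuclideanSpace ℝ (Fin 6) :=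
  direction (cutoff 5 (‖x.2‖ ^ 2)) (cutoff 4 (‖x.2‖ ^ 2)) (cutoff 3 (‖x.2‖ ^ 2)) (star x.2 * x.1)
    (invConj x.1 qi)

/-- The embedding `innerEmb`, normalised so that it maps `qi` to `baseVec`. -/
def innerVec (x : ℍ × ℍ) : ℍ →ₗ[ℝ] EuclideanSpace ℝ (Fin 6) :=
  ‖innerEmb x qi‖⁻¹ •
    (alignVia baseVec (innerDir x) (innerEmb x qi)).toLinearEquiv.toLinearMap ∘ₗ innerEmb x

/-- The last three coordinates, as an imaginary quaternion. -/
def lastIm : EuclideanSpace ℝ (Fin 6) →ₗ[ℝ] ℍ where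
  toFun z := quat 0 (z 3) (z 4) (z 5)
  map_add' z w := by ext <;> simp
  map_smul' r z := by ext <;> simp

/-- The map from `baseVecᗮ = ℝ² ⊕ Im ℍ` to the normal space at `x`, where the summand `Im ℍ` is
identified with the normal space of the rank-three bundle over `S⁴` through its second fibre
coordinate. -/
def normalOfVec (x : ℍ × ℍ) : EuclideanSpace ℝ (Fin 6) →ₗ[ℝ] NormalData :=
  (EuclideanSpace.projₗ 1).prod ((EuclideanSpace.projₗ 2).prod
    (((‖x.1‖ ^ 2)⁻¹ • LinearMap.mulLeftRight ℝ (star (star x.2 * x.1), star x.2 * x.1) ∘ₗ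
      lastIm).prod (-(‖x.1‖ ^ 2) • lastIm)))

/-- The monomorphism over the part `{‖q‖² < 3 / 5}` of `S⁷`. -/
def innerMono (x : ℍ × ℍ) : ℍ →ₗ[ℝ] NormalData := normalOfVec x ∘ₗ innerVec x

/-- The monomorphism over the part `{‖q‖² > 1 / 2}` of `S⁷`, without radial components: it uses the
first fibre coordinate, in the trivialisation given by `q`. -/
def outerMono (x : ℍ × ℍ) : ℍ →ₗ[ℝ] NormalData :=
  LinearMap.prod 0 (LinearMap.prod 0 (LinearMap.prod LinearMap.id
    (-((‖x.2‖ ^ 2) ^ 2)⁻¹ • LinearMap.mulLeftRight ℝ (star x.2 * x.1, star (star x.2 * x.1))) ∘ₗ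
      LinearMap.mulLeftRight ℝ (star x.2, x.2)))

/-- The monomorphism from the vertical tangent line bundle to the normal bundle. -/
def normalMono (x : ℍ × ℍ) : ℍ →ₗ[ℝ] NormalData :=
  if ‖x.2‖ ^ 2 < 3 / 5 then innerMono x else outerMono x

lemma innerVec_apply (x : ℍ × ℍ) (m : ℍ) : innerVec x m =
    ‖innerEmb x qi‖⁻¹ • alignVia baseVec (innerDir x) (innerEmb x qi) (innerEmb x m) := rfl

lemma normalOfVec_apply (x : ℍ × ℍ) (z : EuclideanSpace ℝ (Fin 6)) : normalOfVec x z =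
    (z 1, z 2, (‖x.1‖ ^ 2)⁻¹ • (star (star x.2 * x.1) * lastIm z * (star x.2 * x.1)),
      -(‖x.1‖ ^ 2) • lastIm z) := rfl

lemma outerMono_apply (x : ℍ × ℍ) (m : ℍ) : outerMono x m =
    (0, 0, star x.2 * m * x.2, -((‖x.2‖ ^ 2) ^ 2)⁻¹ •
      (star x.2 * x.1 * (star x.2 * m * x.2) * star (star x.2 * x.1))) := rfl

section Equivariant

variable {g : ℍ} (hg : ‖g‖ = 1) (hgi : star g * qi * g = qi) (x : ℍ × ℍ) (m : ℍ)
include hg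

lemma innerEmb_mul : innerEmb (g * x.1, g * x.2) m = innerEmb x (star g * m * g) := by
  simp only [innerEmb, LinearMap.comp_apply, norm_mul, hg, one_mul, star_mul_mul_mul hg,
    invConj_mul hg]

lemma normalOfVec_mul (z : EuclideanSpace ℝ (Fin 6)) :
    normalOfVec (g * x.1, g * x.2) z = normalOfVec x z := by
  simp only [normalOfVec_apply, norm_mul, hg, one_mul, star_mul_mul_mul hg]

lemma outerMono_mul : outerMono (g * x.1, g * x.2) m = outerMono x (star g * m * g) := by
  simp only [outerMono_apply, norm_mul, hg, one_mul, star_mul_mul_mul hg, conj_conj]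

include hgi

lemma innerDir_mul : innerDir (g * x.1, g * x.2) = innerDir x := by
  simp only [innerDir, norm_mul, hg, one_mul, star_mul_mul_mul hg, invConj_mul hg, hgi]

lemma innerMono_mul : innerMono (g * x.1, g * x.2) m = innerMono x (star g * m * g) := by
  simp only [innerMono, LinearMap.comp_apply, normalOfVec_mul hg, innerVec_apply,
    innerDir_mul hg hgi, innerEmb_mul hg, hgi]

lemma normalMono_mul : normalMono (g * x.1, g * x.2) m = normalMono x (star g * m * g) := by
  unfold normalMono
  simp only [norm_mul, hg, one_mul]
  split_ifs
  · exact innerMono_mul hg hgi x m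
  · exact outerMono_mul hg x m

end Equivariant

section Normal

variable (x : ℍ × ℍ)

lemma conj_mul_conj (a m : ℍ) : a * (star a * m * a) * star a = (‖a‖ ^ 2) ^ 2 • m := by
  have h : a * (star a * m * a) * star a = a * star a * m * (a * star a) := by
    simp only [mul_assoc]
  rw [h, self_mul_star_eq, Quaternion.coe_mul_eq_smul, Quaternion.mul_coe_eq_smul, smul_smul, ← sq]

lemma star_conj_mul_conj (a m : ℍ) : star a * (a * m * star a) * a = (‖a‖ ^ 2) ^ 2 • m := by
  simpa using conj_mul_conj (star a) m

lemma norm_star_mul_sq : ‖star x.2 * x.1‖ ^ 2 = ‖x.2‖ ^ 2 * ‖x.1‖ ^ 2 := by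
  rw [norm_mul, norm_star, mul_pow]

lemma normalOfVec_normal_fst (z : EuclideanSpace ℝ (Fin 6)) :
    star (star x.2 * x.1) * (normalOfVec x z).2.2.2 * (star x.2 * x.1) =
      -((‖x.1‖ ^ 2) ^ 2 • (normalOfVec x z).2.2.1) := by
  rw [normalOfVec_apply]
  rcases eq_or_ne x.1 0 with h | h
  · simp [h]
  · have := norm_ne_zero_iff.2 h
    simp only [mul_smul_comm, smul_mul_assoc, smul_smul, ← neg_smul]
    congr 1
    field_simp

lemma normalOfVec_normal_snd (z : EuclideanSpace ℝ (Fin 6)) :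
    (star x.2 * x.1) * (normalOfVec x z).2.2.1 * star (star x.2 * x.1) =
      -((‖x.2‖ ^ 2) ^ 2 • (normalOfVec x z).2.2.2) := by
  rw [normalOfVec_apply]
  rcases eq_or_ne x.1 0 with h | h
  · simp [h]
  · have := norm_ne_zero_iff.2 h
    simp only [mul_smul_comm, smul_mul_assoc]
    rw [conj_mul_conj, norm_star_mul_sq, smul_smul, smul_smul, ← neg_smul]
    congr 1
    field_simp

lemma outerMono_normal_fst (m : ℍ) :
    star (star x.2 * x.1) * (outerMono x m).2.2.2 * (star x.2 * x.1) =
      -((‖x.1‖ ^ 2) ^ 2 • (outerMono x m).2.2.1) := by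
  rw [outerMono_apply]
  rcases eq_or_ne x.2 0 with h | h
  · simp [h]
  · have := norm_ne_zero_iff.2 h
    simp only [mul_smul_comm, smul_mul_assoc]
    rw [star_conj_mul_conj, norm_star_mul_sq, smul_smul, ← neg_smul]
    congr 1
    field_simp

lemma outerMono_normal_snd (m : ℍ) :
    (star x.2 * x.1) * (outerMono x m).2.2.1 * star (star x.2 * x.1) =
      -((‖x.2‖ ^ 2) ^ 2 • (outerMono x m).2.2.2) := by
  rw [outerMono_apply]
  rcases eq_or_ne x.2 0 with h | h
  · simp [h]
  · have := norm_ne_zero_iff.2 h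
    simp [smul_smul, this]

lemma normalOfVec_re (z : EuclideanSpace ℝ (Fin 6)) :
    (normalOfVec x z).2.2.1.re = 0 ∧ (normalOfVec x z).2.2.2.re = 0 := by
  have h : (lastIm z).re = 0 := rfl
  rw [normalOfVec_apply]
  simp only [Quaternion.re_smul, star_mul_mul_re h, h, smul_zero, and_self]

lemma outerMono_re {m : ℍ} (hm : m.re = 0) :
    (outerMono x m).2.2.1.re = 0 ∧ (outerMono x m).2.2.2.re = 0 := by
  have h : (star x.2 * m * x.2).re = 0 := star_mul_mul_re hm x.2
  rw [outerMono_apply]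
  simp only [Quaternion.re_smul, mul_mul_star_re h, h, smul_zero, and_self]

end Normal

lemma inner_baseVec (z : EuclideanSpace ℝ (Fin 6)) : ⟪baseVec, z⟫ = z 0 := by
  simp [baseVec, imPair, PiLp.inner_apply, Fin.sum_univ_succ]

lemma eq_zero_of_normalOfVec_eq_zero {x : ℍ × ℍ} (hp : x.1 ≠ 0) {z : EuclideanSpace ℝ (Fin 6)}
    (hz : ⟪baseVec, z⟫ = 0) (h : normalOfVec x z = 0) : z = 0 := by
  have h₁ : z 1 = 0 := congr(($h).1)
  have h₂ : z 2 = 0 := congr(($h).2.1)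
  have h₃ : -(‖x.1‖ ^ 2) • lastIm z = 0 := congr(($h).2.2.2)
  have hlast : lastIm z = 0 := (smul_eq_zero.1 h₃).resolve_left (by simpa using hp)
  have hI : z 3 = 0 := congr(($hlast).imI)
  have hJ : z 4 = 0 := congr(($hlast).imJ)
  have hK : z 5 = 0 := congr(($hlast).imK)
  rw [inner_baseVec] at hz
  ext i
  fin_cases i <;> assumption

lemma inner_innerEmb_eq_zero {x : ℍ × ℍ} (hp : x.1 ≠ 0) {m : ℍ} (hm : m.imI = 0) :
    ⟪innerEmb x qi, innerEmb x m⟫ = 0 := by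
  rw [innerEmb, LinearMap.comp_apply, LinearMap.comp_apply, inner_conformalEmb (invConj_re _ rfl),
    inner_invConj hp, real_inner_comm, inner_qi, hm, mul_zero]

section Injective

variable {x : ℍ × ℍ} (hx : ‖x.1‖ ^ 2 + ‖x.2‖ ^ 2 = 1)
include hx

lemma fst_ne_zero (hq : ‖x.2‖ ^ 2 < 3 / 5) : x.1 ≠ 0 := by
  intro h
  rw [h, norm_zero] at hx
  linarith

lemma admissible_of_lt (hq : ‖x.2‖ ^ 2 < 3 / 5) :
    Admissible (cutoff 5 (‖x.2‖ ^ 2)) (cutoff 4 (‖x.2‖ ^ 2)) (cutoff 3 (‖x.2‖ ^ 2))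
      (star x.2 * x.1) :=
  admissible_cutoff (sq_nonneg _) hq (by rw [norm_star_mul_sq, ← hx]; ring)

lemma not_sameRay_innerDir_baseVec (hq : ‖x.2‖ ^ 2 < 3 / 5) :
    ¬SameRay ℝ (innerDir x) baseVec :=
  not_sameRay_direction_baseVec (admissible_of_lt hx hq) (invConj_re _ rfl)
    (by rw [norm_invConj (fst_ne_zero hx hq), norm_qi])

lemma not_sameRay_innerDir_innerEmb (hq : ‖x.2‖ ^ 2 < 3 / 5) :
    ¬SameRay ℝ (innerDir x) (innerEmb x qi) :=
  not_sameRay_direction_conformalEmb (admissible_of_lt hx hq) (invConj_re _ rfl)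
    (by rw [norm_invConj (fst_ne_zero hx hq), norm_qi])

lemma innerEmb_ne_zero (hq : ‖x.2‖ ^ 2 < 3 / 5) {m : ℍ} (hm : m.re = 0) (hm₀ : m ≠ 0) :
    innerEmb x m ≠ 0 := by
  refine conformalEmb_ne_zero ((admissible_of_lt hx hq).ne_zero.imp_right
    (squareHomotopy_ne_zero _)) (invConj_re _ hm) ?_
  rw [← norm_ne_zero_iff, norm_invConj (fst_ne_zero hx hq)]
  exact norm_ne_zero_iff.2 hm₀

lemma innerDir_ne_zero (hq : ‖x.2‖ ^ 2 < 3 / 5) : innerDir x ≠ 0 := fun h =>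
  not_sameRay_innerDir_baseVec hx hq (h ▸ SameRay.zero_left _)

lemma innerEmb_qi_ne_zero (hq : ‖x.2‖ ^ 2 < 3 / 5) : innerEmb x qi ≠ 0 :=
  innerEmb_ne_zero hx hq rfl (norm_ne_zero_iff.1 (by simp [norm_qi]))

lemma inner_baseVec_innerVec (hq : ‖x.2‖ ^ 2 < 3 / 5) {m : ℍ} (hm : m.imI = 0) :
    ⟪baseVec, innerVec x m⟫ = 0 := by
  rw [innerVec_apply, inner_smul_right, inner_alignVia_eq_zero norm_baseVec
    (innerDir_ne_zero hx hq) (innerEmb_qi_ne_zero hx hq)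
    (inner_innerEmb_eq_zero (fst_ne_zero hx hq) hm), mul_zero]

lemma innerMono_ne_zero (hq : ‖x.2‖ ^ 2 < 3 / 5) {m : ℍ} (hm : m.re = 0) (hI : m.imI = 0)
    (hm₀ : m ≠ 0) : innerMono x m ≠ 0 := fun h => by
  have hz : innerVec x m ≠ 0 := by
    rw [innerVec_apply]
    exact smul_ne_zero (inv_ne_zero (norm_ne_zero_iff.2 (innerEmb_qi_ne_zero hx hq)))
      (((LinearIsometryEquiv.map_eq_zero_iff _).not.2 (innerEmb_ne_zero hx hq hm hm₀)))
  exact hz (eq_zero_of_normalOfVec_eq_zero (fst_ne_zero hx hq) (inner_baseVec_innerVec hx hq hI) h)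

end Injective

lemma outerMono_ne_zero {x : ℍ × ℍ} (hq : x.2 ≠ 0) {m : ℍ} (hm₀ : m ≠ 0) : outerMono x m ≠ 0 := by
  intro h
  have h' : star x.2 * m * x.2 = 0 := congr(($h).2.2.1)
  simp [hq, hm₀] at h'

section Overlap

variable {x : ℍ × ℍ}

lemma innerEmb_of_half_le (hq : 1 / 2 ≤ ‖x.2‖ ^ 2) (m : ℍ) : innerEmb x m =
    imPair (0, star x.2 * x.1 * (star x.2 * x.1) * invConj x.1 m *
      star (star x.2 * x.1 * (star x.2 * x.1))) := by
  rw [innerEmb, cutoff_eq_zero (k := 5) (by linarith), LinearMap.comp_apply, conformalEmb_apply]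
  simp [squareHomotopy]

lemma innerDir_of_half_le (hq : 1 / 2 ≤ ‖x.2‖ ^ 2) : innerDir x = -innerEmb x qi := by
  rw [innerEmb_of_half_le hq, innerDir, cutoff_eq_zero (k := 5) (by linarith),
    cutoff_eq_zero (k := 4) (by linarith), direction, ← map_neg]
  refine imPair_inj.2 ?_
  simp only [directionPair_zero_snd]
  simp [directionPair, squareHomotopy]

lemma norm_innerEmb_qi (hp : x.1 ≠ 0) (hq : 1 / 2 ≤ ‖x.2‖ ^ 2) :
    ‖innerEmb x qi‖ = ‖star x.2 * x.1‖ ^ 4 := by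
  rw [← sq_eq_sq₀ (norm_nonneg _) (by positivity), innerEmb, LinearMap.comp_apply,
    norm_conformalEmb_sq (invConj_re _ rfl), norm_invConj hp, norm_qi,
    cutoff_eq_zero (k := 5) (by linarith)]
  simp only [squareHomotopy, sub_zero, one_smul, zero_smul, add_zero, norm_mul]
  ring

lemma innerVec_of_half_le (hp : x.1 ≠ 0) (hq : 1 / 2 ≤ ‖x.2‖ ^ 2) {m : ℍ} (hm : m.imI = 0) :
    innerVec x m = (‖star x.2 * x.1‖ ^ 4)⁻¹ • innerEmb x m := by
  rw [innerVec_apply, innerDir_of_half_le hq, alignVia_neg_apply _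
    (inner_innerEmb_eq_zero hp hm), norm_innerEmb_qi hp hq]
  rw [innerEmb_of_half_le hq, inner_baseVec]
  rfl

lemma lastIm_imPair {w : ℍ} (hw : w.re = 0) : lastIm (imPair (0, w)) = w :=
  Quaternion.ext _ _ hw.symm rfl rfl rfl

lemma mul_invConj_mul (hp : x.1 ≠ 0) (m : ℍ) :
    star x.2 * x.1 * (star x.2 * x.1) * invConj x.1 m * star (star x.2 * x.1 * (star x.2 * x.1)) =
      ‖x.1‖ ^ 2 • (star x.2 * x.1 * (star x.2 * m * x.2) * star (star x.2 * x.1)) := by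
  have hconj : star x.2 * x.1 * (star x.1 * m * x.1) * star (star x.2 * x.1) =
      (‖x.1‖ ^ 2) ^ 2 • (star x.2 * m * x.2) := by
    rw [← smul_mul_assoc, ← mul_smul_comm, ← conj_mul_conj]
    simp only [star_mul, star_star, mul_assoc]
  have hp' := norm_ne_zero_iff.2 hp
  have hsq (a u : ℍ) : a * a * u * star (a * a) = a * (a * u * star a) * star a := by
    simp only [star_mul, mul_assoc]
  rw [hsq, invConj_apply, mul_smul_comm, smul_mul_assoc, hconj, smul_smul, mul_smul_comm,
    smul_mul_assoc]
  congr 1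
  field_simp

lemma innerMono_eq_outerMono (hp : x.1 ≠ 0) (hq : 1 / 2 ≤ ‖x.2‖ ^ 2) {m : ℍ} (hm : m.re = 0)
    (hI : m.imI = 0) : innerMono x m = outerMono x m := by
  set a := star x.2 * x.1 with ha
  have hp₀ := norm_ne_zero_iff.2 hp
  have hq₀ : ‖x.2‖ ≠ 0 := fun h => by norm_num [h] at hq
  have hre : (a * (star x.2 * m * x.2) * star a).re = 0 := mul_mul_star_re (star_mul_mul_re hm _) _
  have hlast : lastIm (innerVec x m) =
      ((‖x.2‖ ^ 2) ^ 2 * ‖x.1‖ ^ 2)⁻¹ • (a * (star x.2 * m * x.2) * star a) := by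
    rw [innerVec_of_half_le hp hq hI, innerEmb_of_half_le hq, mul_invConj_mul hp, map_smul,
      lastIm_imPair (by rw [Quaternion.re_smul, hre, smul_zero]), smul_smul, norm_mul, norm_star]
    congr 1
    field_simp
  have hcoord : innerVec x m 1 = 0 ∧ innerVec x m 2 = 0 := by
    simp [innerVec_of_half_le hp hq hI, innerEmb_of_half_le hq, imPair]
  have ha' : ‖a‖ ^ 2 = ‖x.2‖ ^ 2 * ‖x.1‖ ^ 2 := norm_star_mul_sq x
  rw [innerMono, LinearMap.comp_apply, normalOfVec_apply, outerMono_apply, hlast, hcoord.1,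
    hcoord.2, ← ha, mul_smul_comm, smul_mul_assoc, star_conj_mul_conj, ha', smul_smul, smul_smul,
    smul_smul]
  have h₁ : (‖x.1‖ ^ 2)⁻¹ * ((‖x.2‖ ^ 2) ^ 2 * ‖x.1‖ ^ 2)⁻¹ * (‖x.2‖ ^ 2 * ‖x.1‖ ^ 2) ^ 2 = 1 := by
    field_simp
  have h₂ : -(‖x.1‖ ^ 2) * ((‖x.2‖ ^ 2) ^ 2 * ‖x.1‖ ^ 2)⁻¹ = -((‖x.2‖ ^ 2) ^ 2)⁻¹ := by
    field_simp
  rw [h₁, h₂, one_smul]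

end Overlap

section Smooth

variable {x : ℍ × ℍ} (m : ℍ)

lemma contDiffAt_cutoff (k : ℝ) : ContDiffAt ℝ ∞ (fun y : ℍ × ℍ => cutoff k (‖y.2‖ ^ 2)) x := by
  refine Real.smoothTransition.contDiff.contDiffAt.comp x
    (f := fun y : ℍ × ℍ => k - 10 * ‖y.2‖ ^ 2) ?_
  fun_prop

lemma contDiffAt_invConj (hp : x.1 ≠ 0) : ContDiffAt ℝ ∞ (fun y : ℍ × ℍ => invConj y.1 m) x := by
  have h : ‖x.1‖ ^ 2 ≠ 0 := by simpa using hp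
  simp only [invConj_apply]
  fun_prop (disch := assumption)

lemma contDiffAt_innerEmb (hp : x.1 ≠ 0) : ContDiffAt ℝ ∞ (fun y => innerEmb y m) x :=
  contDiffAt_conformalEmb (contDiffAt_cutoff 5)
    (contDiffAt_squareHomotopy (contDiffAt_cutoff 5) (by fun_prop)) (contDiffAt_invConj m hp)

lemma contDiffAt_innerDir (hp : x.1 ≠ 0) : ContDiffAt ℝ ∞ innerDir x :=
  contDiffAt_direction (contDiffAt_cutoff 5) (contDiffAt_cutoff 4) (contDiffAt_cutoff 3)
    (by fun_prop) (contDiffAt_invConj qi hp)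

lemma contDiffAt_innerVec (hx : ‖x.1‖ ^ 2 + ‖x.2‖ ^ 2 = 1) (hq : ‖x.2‖ ^ 2 < 3 / 5) :
    ContDiffAt ℝ ∞ (fun y => innerVec y m) x := by
  have hp := fst_ne_zero hx hq
  have hqi := innerEmb_qi_ne_zero hx hq
  simp only [innerVec_apply]
  exact (((contDiffAt_innerEmb qi hp).norm ℝ hqi).inv (norm_ne_zero_iff.2 hqi)).smul
    (contDiffAt_alignVia norm_baseVec (contDiffAt_innerDir hp) (contDiffAt_innerEmb qi hp)
      (contDiffAt_innerEmb m hp) (not_sameRay_innerDir_innerEmb hx hq)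
      (not_sameRay_innerDir_baseVec hx hq))

lemma contDiffAt_innerMono (hx : ‖x.1‖ ^ 2 + ‖x.2‖ ^ 2 = 1) (hq : ‖x.2‖ ^ 2 < 3 / 5) :
    ContDiffAt ℝ ∞ (fun y => innerMono y m) x := by
  have h : ‖x.1‖ ^ 2 ≠ 0 := by simpa using fst_ne_zero hx hq
  have hvec := contDiffAt_innerVec m hx hq
  have hcoord := contDiffAt_euclidean.1 hvec
  have hlast : ContDiffAt ℝ ∞ (fun y => lastIm (innerVec y m)) x :=
    lastIm.toContinuousLinearMap.contDiff.contDiffAt.comp x hvec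
  simp only [innerMono, LinearMap.comp_apply, normalOfVec_apply]
  refine (hcoord 1).prodMk ((hcoord 2).prodMk ?_)
  fun_prop (disch := assumption)

lemma contDiffAt_outerMono (hq : x.2 ≠ 0) : ContDiffAt ℝ ∞ (fun y => outerMono y m) x := by
  have h : (‖x.2‖ ^ 2) ^ 2 ≠ 0 := by simpa using hq
  simp only [outerMono_apply]
  fun_prop (disch := assumption)

end Smooth

lemma contDiffAt_normalMono {x : ℍ × ℍ} (hx : ‖x.1‖ ^ 2 + ‖x.2‖ ^ 2 = 1) {m : ℍ} (hm : m.re = 0)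
    (hI : m.imI = 0) : ContDiffAt ℝ ∞ (fun y => normalMono y m) x := by
  have hcont : ContinuousAt (fun y : ℍ × ℍ => ‖y.2‖ ^ 2) x := by fun_prop
  rcases lt_or_ge (‖x.2‖ ^ 2) (3 / 5) with hq | hq
  · refine (contDiffAt_innerMono m hx hq).congr_of_eventuallyEq ?_
    filter_upwards [hcont.eventually_lt_const hq] with y hy
    rw [normalMono, if_pos hy]
  · have hq₀ : x.2 ≠ 0 := fun h => by norm_num [h] at hq
    have hcont' : ContinuousAt (fun y : ℍ × ℍ => ‖y.1‖ ^ 2 + ‖y.2‖ ^ 2) x := by fun_prop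
    have hhalf : 1 / 2 < ‖x.2‖ ^ 2 := by linarith
    have hnorm : 3 / 5 < ‖x.1‖ ^ 2 + ‖x.2‖ ^ 2 := by norm_num [hx]
    refine (contDiffAt_outerMono m hq₀).congr_of_eventuallyEq ?_
    filter_upwards [hcont.eventually_const_lt hhalf, hcont'.eventually_const_lt hnorm]
      with y hy hy'
    unfold normalMono
    split_ifs with hlt
    · have hp : y.1 ≠ 0 := fun h => by
        rw [h, norm_zero] at hy'
        linarith
      exact innerMono_eq_outerMono hp hy.le hm hI
    · rfl

theorem isNormalMono_normalMono : IsNormalMono normalMono where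
  contDiffAt x hx := contDiffAt_normalMono hx rfl rfl
  equivariant g hg hgi := normalMono_mul hg hgi
  eq_zero x hx m hm hI := by
    contrapose
    intro hm₀
    unfold normalMono
    split_ifs with hq
    · exact innerMono_ne_zero hx hq hm hI hm₀
    · exact outerMono_ne_zero (fun h => hq (by norm_num [h])) hm₀
  re_eq_zero x m hm := by
    unfold normalMono
    split_ifs
    · exact normalOfVec_re x (innerVec x m)
    · exact outerMono_re x hm
  normal_fst x m := by
    unfold normalMono
    split_ifs
    · exact normalOfVec_normal_fst x (innerVec x m)
    · exact outerMono_normal_fst x m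
  normal_snd x m := by
    unfold normalMono
    split_ifs
    · exact normalOfVec_normal_snd x (innerVec x m)
    · exact outerMono_normal_snd x m

end NormalMono

section Coordinates

/-- The identification `ℝ⁸ = ℍ × ℍ`. -/
def quatPair : EuclideanSpace ℝ (Fin 8) →ₗ[ℝ] ℍ × ℍ where
  toFun x := (quat (x 0) (x 1) (x 2) (x 3), quat (x 4) (x 5) (x 6) (x 7))
  map_add' x y := by ext <;> simp
  map_smul' r x := by ext <;> simp

lemma norm_quatPair (x : EuclideanSpace ℝ (Fin 8)) :
    ‖(quatPair x).1‖ ^ 2 + ‖(quatPair x).2‖ ^ 2 = ‖x‖ ^ 2 := by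
  simp [quatPair, norm_sq_eq, EuclideanSpace.norm_sq_eq, Fin.sum_univ_succ]
  ring

lemma quatPair_injective : Function.Injective quatPair := by
  refine (injective_iff_map_eq_zero _).2 fun x hx => ?_
  simpa [hx] using (norm_quatPair x).symm

/-- The coordinates of `ℝ × ℍ × Im ℍ × Im ℍ = ℝ¹¹`. -/
def codeCoords : Code →ₗ[ℝ] EuclideanSpace ℝ (Fin 11) where
  toFun y := !₂[y.1, y.2.1.re, y.2.1.imI, y.2.1.imJ, y.2.1.imK, y.2.2.1.imI, y.2.2.1.imJ,
    y.2.2.1.imK, y.2.2.2.imI, y.2.2.2.imJ, y.2.2.2.imK]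
  map_add' x y := by ext i; fin_cases i <;> simp
  map_smul' r x := by ext i; fin_cases i <;> simp

/-- The inverse of `codeCoords` on `ℝ × ℍ × Im ℍ × Im ℍ`. -/
def codeOfCoords : EuclideanSpace ℝ (Fin 11) →ₗ[ℝ] Code where
  toFun z :=
    (z 0, quat (z 1) (z 2) (z 3) (z 4), quat 0 (z 5) (z 6) (z 7), quat 0 (z 8) (z 9) (z 10))
  map_add' x y := by ext <;> simp
  map_smul' r x := by ext <;> simp

lemma codeOfCoords_codeCoords {y : Code} (h₁ : y.2.2.1.re = 0) (h₂ : y.2.2.2.re = 0) :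
    codeOfCoords (codeCoords y) = y :=
  Prod.ext rfl (Prod.ext rfl
    (Prod.ext (Quaternion.ext _ _ h₁.symm rfl rfl rfl) (Quaternion.ext _ _ h₂.symm rfl rfl rfl)))

/-- The map `perturbedHopf` in Euclidean coordinates. -/
def perturbedHopfCoords (Φ : ℍ × ℍ → ℍ →ₗ[ℝ] NormalData) (x : EuclideanSpace ℝ (Fin 8)) :
    EuclideanSpace ℝ (Fin 11) := codeCoords (perturbedHopf Φ (quatPair x))

variable {Φ : ℍ × ℍ → ℍ →ₗ[ℝ] NormalData} (hΦ : IsNormalMono Φ)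
include hΦ

lemma codeOfCoords_perturbedHopfCoords (x : EuclideanSpace ℝ (Fin 8)) :
    codeOfCoords (perturbedHopfCoords Φ x) = perturbedHopf Φ (quatPair x) :=
  codeOfCoords_codeCoords (perturbedHopf_re hΦ _).1 (perturbedHopf_re hΦ _).2

lemma perturbedHopfCoords_neg (x : EuclideanSpace ℝ (Fin 8)) :
    perturbedHopfCoords Φ (-x) = perturbedHopfCoords Φ x := by
  simp only [perturbedHopfCoords, map_neg, perturbedHopf_neg hΦ]

lemma contDiffAt_perturbedHopfCoords {x : EuclideanSpace ℝ (Fin 8)} (hx : ‖x‖ = 1) :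
    ContDiffAt ℝ ∞ (perturbedHopfCoords Φ) x :=
  codeCoords.toContinuousLinearMap.contDiff.contDiffAt.comp x
    ((contDiffAt_perturbedHopf hΦ (by rw [norm_quatPair, hx, one_pow])).comp x
      quatPair.toContinuousLinearMap.contDiff.contDiffAt)

lemma eq_or_eq_neg_of_perturbedHopfCoords_eq {x y : EuclideanSpace ℝ (Fin 8)} (hx : ‖x‖ = 1)
    (hy : ‖y‖ = 1) (h : perturbedHopfCoords Φ x = perturbedHopfCoords Φ y) : x = y ∨ x = -y := by
  have h' : perturbedHopf Φ (quatPair x) = perturbedHopf Φ (quatPair y) := by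
    simp only [← codeOfCoords_perturbedHopfCoords hΦ, h]
  rw [← quatPair_injective.eq_iff, ← quatPair_injective.eq_iff (b := -y), map_neg]
  exact eq_or_eq_neg_of_perturbedHopf_eq hΦ (by rw [norm_quatPair, hx, one_pow])
    (by rw [norm_quatPair, hy, one_pow]) h'

lemma eq_zero_of_fderiv_perturbedHopfCoords_eq_zero {x v : EuclideanSpace ℝ (Fin 8)}
    (hx : ‖x‖ = 1) (hv : ⟪x, v⟫ = 0) (h : fderiv ℝ (perturbedHopfCoords Φ) x v = 0) : v = 0 := by
  have hcode : codeWithRadius Φ ∘ quatPair =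
      fun y => (‖y‖ ^ 2, codeOfCoords (perturbedHopfCoords Φ y)) := by
    funext y
    simp only [codeOfCoords_perturbedHopfCoords hΦ, ← norm_quatPair y, codeWithRadius,
      Function.comp_apply]
  have hfderiv := ((contDiffAt_perturbedHopfCoords hΦ hx).differentiableAt (by simp)).hasFDerivAt
  have hline : HasLineDerivAt ℝ (codeWithRadius Φ ∘ quatPair) 0 x v := by
    rw [hcode]
    convert! ((hasFDerivAt_id x).norm_sq.prodMk
      (codeOfCoords.toContinuousLinearMap.hasFDerivAt.comp x hfderiv)).hasLineDerivAt v
    simp [hv, h, Prod.zero_eq_mk]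
  refine quatPair_injective ((eq_zero_of_hasLineDerivAt_perturbedHopf hΦ (x := quatPair x)
    (by rw [norm_quatPair, hx, one_pow]) ?_).trans (map_zero quatPair).symm)
  simpa only [HasLineDerivAt, Function.comp_def, map_add, map_smul] using hline

end Coordinates

section Sphere

variable {E F : Type*} [NormedAddCommGroup E] [InnerProductSpace ℝ E] [NormedAddCommGroup F]
  [NormedSpace ℝ F] {n : ℕ} [Fact (Module.finrank ℝ E = n + 1)]

lemma mfderiv_comp_coe_sphere_injective {f : E → F} {x : sphere (0 : E) 1}
    (hf : DifferentiableAt ℝ f x) (h : ∀ v, ⟪(x : E), v⟫ = 0 → fderiv ℝ f x v = 0 → v = 0) :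
    Function.Injective (mfderiv (𝓡 n) 𝓘(ℝ, F) (fun y : sphere (0 : E) 1 => f y) x) := by
  have hcomp (w : TangentSpace (𝓡 n) x) :
      mfderiv (𝓡 n) 𝓘(ℝ, F) (fun y : sphere (0 : E) 1 => f y) x w =
        fderiv ℝ f x (mvfderiv (𝓡 n) ((↑) : sphere (0 : E) 1 → E) x w) := by
    rw [← mfderiv_eq_fderiv]
    exact congr($(mfderiv_comp x hf.mdifferentiableAt
      ((contMDiff_coe_sphere (m := 1) x).mdifferentiableAt one_ne_zero)) w)
  refine (injective_iff_map_eq_zero _).2 fun w hw => injective_mvfderiv_subtypeVal_sphere x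
    ((h _ ?_ ((hcomp w).symm.trans hw)).trans (map_zero _).symm)
  rw [← Submodule.mem_orthogonal_singleton_iff_inner_right, ← range_mvfderiv_subtypeVal (n := n) x]
  exact ⟨w, rfl⟩

end Sphere

end RP7

end

/-- There is a smooth embedding of `ℝP⁷ = S⁷/{±1}` into `ℝ¹¹`, witnessed by a smooth map
on the sphere `S⁷` which is antipodally invariant, separates antipodal classes, and is an
immersion. -/
theorem rp7_smoothly_embeds_in_R11 :
    ∃ f : sphere (0 : EuclideanSpace ℝ (Fin 8)) 1 → EuclideanSpace ℝ (Fin 11),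
      ContMDiff (𝓡 7) 𝓘(ℝ, EuclideanSpace ℝ (Fin 11)) (⊤ : ℕ∞) f ∧
      (∀ x : sphere (0 : EuclideanSpace ℝ (Fin 8)) 1, f (-x) = f x) ∧
      (∀ x y : sphere (0 : EuclideanSpace ℝ (Fin 8)) 1, f x = f y → x = y ∨ x = -y) ∧
      (∀ x : sphere (0 : EuclideanSpace ℝ (Fin 8)) 1,
        Function.Injective (mfderiv (𝓡 7) 𝓘(ℝ, EuclideanSpace ℝ (Fin 11)) f x)) := by
  have hΦ := RP7.isNormalMono_normalMono
  have hnorm (x : sphere (0 : EuclideanSpace ℝ (Fin 8)) 1) : ‖x.1‖ = 1 := norm_eq_of_mem_sphere x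
  have hsmooth (x : sphere (0 : EuclideanSpace ℝ (Fin 8)) 1) :=
    RP7.contDiffAt_perturbedHopfCoords hΦ (hnorm x)
  refine ⟨fun x => RP7.perturbedHopfCoords RP7.normalMono x, fun x => ?_, fun x => ?_,
    fun x y hxy => ?_, fun x => ?_⟩
  · exact (hsmooth x).contMDiffAt.comp x contMDiff_coe_sphere.contMDiffAt
  · exact RP7.perturbedHopfCoords_neg hΦ x
  · exact (RP7.eq_or_eq_neg_of_perturbedHopfCoords_eq hΦ (hnorm x) (hnorm y) hxy).imp
      Subtype.ext Subtype.ext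
  · exact RP7.mfderiv_comp_coe_sphere_injective ((hsmooth x).differentiableAt (by simp))
      fun v hv h => RP7.eq_zero_of_fderiv_perturbedHopfCoords_eq_zero hΦ (hnorm x) hv h
end

section
/- There exists a continuous map g from the unit sphere S⁷ = Metric.sphere 0 1 in EuclideanSpace ℝ (Fin 8) to EuclideanSpace ℝ (Fin 11) such that g(−x) = g(x) for every x ∈ S⁷, and the induced map on the quotient space S⁷/∼ (where x ∼ y if and only if x = y or x = −y, with the quotient topology) is a topological embedding (IsEmbedding). In other words, real projective 7-space ℝP⁷ embeds topologically into ℝ¹¹. -/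
open Metric

/-- The antipodal equivalence relation on the unit sphere `S⁷ ⊆ ℝ⁸`:
`x ∼ y` iff `x = y` or `x = -y`. -/
def antipodalSetoid : Setoid (sphere (0 : EuclideanSpace ℝ (Fin 8)) 1) where
  r x y := x = y ∨ x = -y
  iseqv := by
    constructor
    · exact fun x => Or.inl rfl
    · rintro x y (rfl | rfl)
      · exact Or.inl rfl
      · exact Or.inr (neg_neg y).symm
    · rintro x y z (rfl | rfl) (rfl | rfl)
      · exact Or.inl rfl
      · exact Or.inr rfl
      · exact Or.inr rfl
      · exact Or.inl (neg_neg z)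

/-!
A vector `a ∈ ℂ²` and its quaternionic rotation `j a` are orthogonal of the same length, so for
`‖c‖ < 1` the symmetric matrix `S = a aᵀ + c (j a) (j a)ᵀ` has singular values
`‖a‖ ^ 2 > ‖c‖ * ‖a‖ ^ 2`, and the solutions of `S v̄ = ‖a‖ ^ 2 v` of length `‖a‖` are `± a`: the
matrix determines `a` up to sign, and then `c`. For a unit vector `(a, b) ∈ ℂ² × ℂ²` take for the
two coefficients `c` the components of the quaternion `b ā`, one in the matrix of `a` and one in
that of `b`. The two matrices determine `a` and `b` up to independent signs, and `b ā`, which is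
nonzero unless `a` or `b` vanishes, detects the relative sign. Scaling the pair of matrices by
`r ^ 2` scales `a` and `b` by `r`, so even the ray of the pair in `ℝ¹²` determines `± (a, b)`.
These rays form a copy of `ℝP⁷` in `S¹¹` which misses a point, whence stereographic projection
moves it into `ℝ¹¹`.
-/

open Module Topology
open scoped ComplexConjugate InnerProductSpace

section Topology

variable {X Y E : Type*} [TopologicalSpace X]

theorem isEmbedding_quotientLift_of_compactSpace [CompactSpace X] [TopologicalSpace Y] [T2Space Y]
    {s : Setoid X} {g : X → Y} (hg : Continuous g) (h : ∀ a b, s.r a b → g a = g b)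
    (hs : ∀ a b, g a = g b → s.r a b) : IsEmbedding (Quotient.lift g h) := by
  refine ((hg.quotient_lift h).isClosedEmbedding ?_).isEmbedding
  rintro ⟨a⟩ ⟨b⟩ hab
  exact Quotient.sound (hs a b hab)

variable [NormedAddCommGroup E] [InnerProductSpace ℝ E]

theorem exists_continuous_eq_iff_sameRay {n : ℕ} [Fact (finrank ℝ E = n + 1)] {f : X → E}
    (hf : Continuous f) {u : E} (hu : u ≠ 0) (hfu : ∀ x, ¬ SameRay ℝ (f x) u) :
    ∃ g : X → EuclideanSpace ℝ (Fin n), Continuous g ∧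
      ∀ x y, g x = g y ↔ SameRay ℝ (f x) (f y) := by
  have hf0 (x : X) : f x ≠ 0 := fun h ↦ hfu x (h ▸ SameRay.zero_left u)
  have unit_mem {v : E} (hv : v ≠ 0) : ‖v‖⁻¹ • v ∈ sphere (0 : E) 1 := by
    simp [norm_smul, hv]
  let pole : sphere (0 : E) 1 := ⟨_, unit_mem hu⟩
  let F (x : X) : sphere (0 : E) 1 := ⟨_, unit_mem (hf0 x)⟩
  have hF : Continuous F :=
    ((hf.norm.inv₀ fun x ↦ norm_ne_zero_iff.mpr (hf0 x)).smul hf).subtype_mk _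
  have F_mem (x : X) : F x ∈ (stereographic' n pole).source := by
    rw [stereographic'_source]
    exact fun h ↦ hfu x <|
      (sameRay_iff_inv_norm_smul_eq_of_ne (hf0 x) hu).mpr (congrArg Subtype.val h)
  refine ⟨fun x ↦ stereographic' n pole (F x),
    (stereographic' n pole).continuousOn.comp_continuous hF F_mem, fun x y ↦ ?_⟩
  rw [(stereographic' n pole).injOn.eq_iff (F_mem x) (F_mem y), Subtype.ext_iff,
    sameRay_iff_inv_norm_smul_eq_of_ne (hf0 x) (hf0 y)]

end Topology

section InnerProductSpace

theorem norm_fst_mul_norm_snd_lt_one {α β : Type*} [SeminormedAddCommGroup α]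
    [SeminormedAddCommGroup β] {x : WithLp 2 (α × β)} (hx : ‖x‖ = 1) :
    ‖x.fst‖ * ‖x.snd‖ < 1 := by
  have := WithLp.prod_norm_sq_eq_of_L2 x
  nlinarith [sq_nonneg (‖x.fst‖ - ‖x.snd‖)]

variable {𝕜 V : Type*} [RCLike 𝕜] [NormedAddCommGroup V] [InnerProductSpace 𝕜 V]

theorem norm_inner_fst_snd_lt_one {x : WithLp 2 (V × V)} (hx : ‖x‖ = 1) :
    ‖⟪x.fst, x.snd⟫_𝕜‖ < 1 :=
  (norm_inner_le_norm _ _).trans_lt (norm_fst_mul_norm_snd_lt_one hx)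

theorem inner_eq_zero_of_smul_add_smul_eq_norm_sq_smul {a a' b : V} {c : 𝕜}
    (haa' : ⟪a', a⟫_𝕜 = 0) (ha' : ‖a'‖ ≤ ‖b‖) (hc : ‖c‖ < 1)
    (h : ⟪b, a⟫_𝕜 • a + (c * ⟪b, a'⟫_𝕜) • a' = (‖b‖ ^ 2 : 𝕜) • b) : ⟪b, a'⟫_𝕜 = 0 := by
  by_contra hne
  have hb : 0 < ‖b‖ := norm_pos_iff.mpr fun hb ↦ hne (by simp [hb])
  have pair : c * ⟪b, a'⟫_𝕜 * (‖a'‖ ^ 2 : 𝕜) = (‖b‖ ^ 2 : 𝕜) * ⟪a', b⟫_𝕜 := by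
    simpa [inner_add_right, inner_smul_right, haa', inner_self_eq_norm_sq_to_K]
      using congrArg (⟪a', ·⟫_𝕜) h
  have norms : ‖c‖ * ‖a'‖ ^ 2 = ‖b‖ ^ 2 := by
    have := congrArg norm pair
    simp only [norm_mul, norm_pow, RCLike.norm_ofReal, abs_norm, norm_inner_symm a' b] at this
    exact mul_right_cancel₀ (norm_ne_zero_iff.mpr hne) (by linarith)
  have : ‖c‖ * ‖a'‖ ^ 2 ≤ ‖c‖ * ‖b‖ ^ 2 := by gcongr
  nlinarith [pow_pos hb 2]

theorem eq_or_eq_neg_of_inner_smul_eq_norm_sq_smul {a b : V} (hb : b ≠ 0)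
    (h : ⟪b, a⟫_𝕜 • a = (‖b‖ ^ 2 : 𝕜) • b) : a = b ∨ a = -b := by
  have hb2 : (‖b‖ ^ 2 : 𝕜) ≠ 0 := by simpa using hb
  have square : ⟪b, a⟫_𝕜 ^ 2 = (‖b‖ ^ 2 : 𝕜) ^ 2 := by
    simpa [inner_smul_right, inner_self_eq_norm_sq_to_K, ← sq] using congrArg (⟪b, ·⟫_𝕜) h
  rcases sq_eq_sq_iff_eq_or_eq_neg.mp square with hs | hs <;> rw [hs] at h
  · exact .inl (smul_right_injective V hb2 h)
  · refine .inr (smul_right_injective V hb2 ?_)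
    simpa [neg_eq_iff_eq_neg] using h

theorem finrank_real_withLp_prod (ι : Type*) [Fintype ι] :
    finrank ℝ (WithLp 2 (EuclideanSpace ℂ ι × EuclideanSpace ℂ ι)) = 4 * Fintype.card ι := by
  rw [(WithLp.linearEquiv 2 ℝ (EuclideanSpace ℂ ι × EuclideanSpace ℂ ι)).finrank_eq, finrank_prod,
    (WithLp.linearEquiv 2 ℝ (ι → ℂ)).finrank_eq, finrank_pi_fintype]
  simp only [Complex.finrank_real_complex, Finset.sum_const, Finset.card_univ, smul_eq_mul]
  ring

end InnerProductSpace

section SymmetricTensor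

variable {𝕜 ι : Type*} [RCLike 𝕜]

/-- The symmetric square `v vᵀ` of a vector, i.e. its image under the Veronese map. Symmetric
matrices are encoded by their entries, indexed by unordered pairs of indices. -/
noncomputable def symSq (v : EuclideanSpace 𝕜 ι) : EuclideanSpace 𝕜 (Sym2 ι) :=
  WithLp.toLp 2 fun p ↦ (p.map v).mul

@[simp]
theorem symSq_mk (v : EuclideanSpace 𝕜 ι) (i j : ι) : symSq v s(i, j) = v i * v j := rfl

@[simp]
theorem symSq_smul (z : 𝕜) (v : EuclideanSpace 𝕜 ι) : symSq (z • v) = z ^ 2 • symSq v := by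
  ext p
  induction p with | _ i j
  simp only [symSq_mk, PiLp.smul_apply, smul_eq_mul]
  ring

@[simp]
theorem symSq_neg (v : EuclideanSpace 𝕜 ι) : symSq (-v) = symSq v := by
  simpa using symSq_smul (-1) v

@[simp]
theorem symSq_zero : symSq (0 : EuclideanSpace 𝕜 ι) = 0 := by
  simpa using symSq_smul 0 (0 : EuclideanSpace 𝕜 ι)

@[simp]
theorem symSq_eq_zero {v : EuclideanSpace 𝕜 ι} : symSq v = 0 ↔ v = 0 := by
  refine ⟨fun h ↦ ?_, fun h ↦ by rw [h, symSq_zero]⟩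
  ext i
  simpa using congrArg (· s(i, i)) h

theorem continuous_symSq : Continuous (symSq : EuclideanSpace 𝕜 ι → _) := by
  refine (PiLp.continuous_toLp 2 _).comp (continuous_pi fun p ↦ ?_)
  induction p with | _ i j
  simp only [Sym2.map_mk, Sym2.mul_mk]
  fun_prop

variable [Fintype ι]

/-- The vector `S v̄`, for `S` a symmetric matrix encoded as in `symSq`; antilinear in `v`. -/
noncomputable def mulConj (v : EuclideanSpace 𝕜 ι) :
    EuclideanSpace 𝕜 (Sym2 ι) →ₗ[𝕜] EuclideanSpace 𝕜 ι where
  toFun S := WithLp.toLp 2 fun i ↦ ∑ j, S s(i, j) * conj (v j)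
  map_add' S T := by ext i; simp [add_mul, Finset.sum_add_distrib]
  map_smul' z S := by ext i; simp [mul_assoc, Finset.mul_sum]

theorem mulConj_symSq (v a : EuclideanSpace 𝕜 ι) : mulConj v (symSq a) = ⟪v, a⟫_𝕜 • a := by
  ext i
  simp only [mulConj, LinearMap.coe_mk, AddHom.coe_mk, symSq_mk, PiLp.inner_apply,
    RCLike.inner_apply, PiLp.smul_apply, smul_eq_mul, Finset.sum_mul]
  exact Finset.sum_congr rfl fun j _ ↦ by ring

end SymmetricTensor

section Quaternionic

/-- Left multiplication by the quaternion `j` on `ℍ = ℂ²`: the antilinear isometry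
`(z, w) ↦ (-w̄, z̄)`, which turns each vector into an orthogonal one. -/
noncomputable def quatJ :
    EuclideanSpace ℂ (Fin 2) →ₛₗᵢ[starRingEnd ℂ] EuclideanSpace ℂ (Fin 2) where
  toFun a := !₂[-conj (a 1), conj (a 0)]
  map_add' a b := by ext i; fin_cases i <;> simp [add_comm]
  map_smul' z a := by ext i; fin_cases i <;> simp
  norm_map' a := by simp [EuclideanSpace.norm_eq, add_comm]

variable {a b : EuclideanSpace ℂ (Fin 2)} {c d : ℂ}

@[simp]
theorem quatJ_apply_zero (a : EuclideanSpace ℂ (Fin 2)) : quatJ a 0 = -conj (a 1) := rfl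

@[simp]
theorem quatJ_apply_one (a : EuclideanSpace ℂ (Fin 2)) : quatJ a 1 = conj (a 0) := rfl

theorem inner_quatJ_self (a : EuclideanSpace ℂ (Fin 2)) : ⟪quatJ a, a⟫_ℂ = 0 := by
  simp only [PiLp.inner_apply, RCLike.inner_apply, Fin.sum_univ_two, quatJ_apply_zero,
    quatJ_apply_one, map_neg, Complex.conj_conj]
  ring

theorem norm_sq_smul_eq_inner_quatJ (a b : EuclideanSpace ℂ (Fin 2)) :
    (‖a‖ ^ 2 : ℂ) • b = ⟪a, b⟫_ℂ • a + ⟪quatJ a, b⟫_ℂ • quatJ a := by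
  have norm_sq : (‖a‖ ^ 2 : ℂ) = ⟪a, a⟫_ℂ := (inner_self_eq_norm_sq_to_K (𝕜 := ℂ) a).symm
  rw [norm_sq]
  ext i
  fin_cases i <;>
    simp only [PiLp.inner_apply, RCLike.inner_apply, Fin.sum_univ_two, Fin.zero_eta, Fin.mk_one,
      PiLp.add_apply, PiLp.smul_apply, smul_eq_mul, quatJ_apply_zero, quatJ_apply_one, map_neg,
      Complex.conj_conj] <;>
    ring

theorem eq_of_inner_eq_of_inner_quatJ_eq (ha : a ≠ 0) {v w : EuclideanSpace ℂ (Fin 2)}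
    (h : ⟪a, v⟫_ℂ = ⟪a, w⟫_ℂ) (hJ : ⟪quatJ a, v⟫_ℂ = ⟪quatJ a, w⟫_ℂ) : v = w := by
  refine smul_right_injective _ (by simpa using ha : (‖a‖ ^ 2 : ℂ) ≠ 0) ?_
  simp only [norm_sq_smul_eq_inner_quatJ, h, hJ]

/-- The symmetric matrix `a aᵀ + c (j a) (j a)ᵀ`. For `‖c‖ < 1` its singular values are
`‖a‖ ^ 2 > ‖c‖ * ‖a‖ ^ 2` and `a` spans the top one, as in Takagi's factorization. -/
noncomputable def takagiMatrix (c : ℂ) (a : EuclideanSpace ℂ (Fin 2)) :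
    EuclideanSpace ℂ (Sym2 (Fin 2)) :=
  symSq a + c • symSq (quatJ a)

@[simp]
theorem takagiMatrix_neg (c : ℂ) (a : EuclideanSpace ℂ (Fin 2)) :
    takagiMatrix c (-a) = takagiMatrix c a := by
  simp [takagiMatrix]

@[simp]
theorem takagiMatrix_zero (c : ℂ) : takagiMatrix c 0 = 0 := by
  simp [takagiMatrix]

theorem takagiMatrix_real_smul (c : ℂ) (r : ℝ) (a : EuclideanSpace ℂ (Fin 2)) :
    takagiMatrix c (r • a) = r ^ 2 • takagiMatrix c a := by
  simp only [takagiMatrix, ← Complex.coe_smul, map_smulₛₗ, Complex.conj_ofReal, symSq_smul,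
    Complex.ofReal_pow, smul_add, smul_comm c]

theorem takagiMatrix_left_injective (ha : a ≠ 0) : Function.Injective (takagiMatrix · a) := by
  intro c d h
  have : symSq (quatJ a) ≠ 0 := by
    simpa [map_eq_zero_iff _ quatJ.injective] using ha
  exact smul_left_injective ℂ this (add_left_cancel h)

theorem eq_or_eq_neg_of_takagiMatrix_eq (hc : ‖c‖ < 1) (hd : ‖d‖ < 1)
    (h : takagiMatrix c a = takagiMatrix d b) : a = b ∨ a = -b := by
  wlog hab : ‖a‖ ≤ ‖b‖ generalizing a b c d
  · exact (this hd hc h.symm (le_of_not_ge hab)).imp Eq.symm fun e ↦ by rw [e, neg_neg]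
  rcases eq_or_ne b 0 with rfl | hb
  · simpa using hab
  have action : ⟪b, a⟫_ℂ • a + (c * ⟪b, quatJ a⟫_ℂ) • quatJ a = (‖b‖ ^ 2 : ℂ) • b := by
    simpa [takagiMatrix, mulConj_symSq, smul_smul, inner_self_eq_norm_sq_to_K,
      inner_eq_zero_symm.mp (inner_quatJ_self b)] using congrArg (mulConj b) h
  have orthogonal : ⟪b, quatJ a⟫_ℂ = 0 :=
    inner_eq_zero_of_smul_add_smul_eq_norm_sq_smul (inner_quatJ_self a)
      (by simpa using hab) hc action
  have collinear : ⟪b, a⟫_ℂ • a = (‖b‖ ^ 2 : ℂ) • b := by simpa [orthogonal] using action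
  exact eq_or_eq_neg_of_inner_smul_eq_norm_sq_smul hb collinear

theorem takagiMatrix_eq_zero_iff (hc : ‖c‖ < 1) : takagiMatrix c a = 0 ↔ a = 0 := by
  refine ⟨fun h ↦ ?_, by rintro rfl; exact takagiMatrix_zero c⟩
  simpa using eq_or_eq_neg_of_takagiMatrix_eq (b := 0) (d := 0) hc (by simp) (by simpa using h)

theorem continuous_takagiMatrix :
    Continuous fun p : ℂ × EuclideanSpace ℂ (Fin 2) ↦ takagiMatrix p.1 p.2 :=
  (continuous_symSq.comp continuous_snd).add
    (continuous_fst.smul (continuous_symSq.comp (quatJ.continuous.comp continuous_snd)))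

end Quaternionic

section PerturbedVeronese

/-- The map `(a, b) ↦ (a aᵀ + z (j a) (j a)ᵀ, b bᵀ + w (j b) (j b)ᵀ)` on `ℂ² × ℂ² = ℝ⁸`, where `z`
and `w` are the components of the quaternionic product `b ā`. -/
noncomputable def perturbedVeronese
    (x : WithLp 2 (EuclideanSpace ℂ (Fin 2) × EuclideanSpace ℂ (Fin 2))) :
    WithLp 2 (EuclideanSpace ℂ (Sym2 (Fin 2)) × EuclideanSpace ℂ (Sym2 (Fin 2))) :=
  WithLp.toLp 2 (takagiMatrix ⟪x.fst, x.snd⟫_ℂ x.fst, takagiMatrix ⟪quatJ x.fst, x.snd⟫_ℂ x.snd)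

variable {x y : WithLp 2 (EuclideanSpace ℂ (Fin 2) × EuclideanSpace ℂ (Fin 2))}

theorem continuous_perturbedVeronese : Continuous perturbedVeronese := by
  have hfst := WithLp.continuous_fst 2 (EuclideanSpace ℂ (Fin 2)) (EuclideanSpace ℂ (Fin 2))
  have hsnd := WithLp.continuous_snd 2 (EuclideanSpace ℂ (Fin 2)) (EuclideanSpace ℂ (Fin 2))
  exact (WithLp.prod_continuous_toLp 2 _ _).comp <|
    (continuous_takagiMatrix.comp ((hfst.inner hsnd).prodMk hfst)).prodMk
      (continuous_takagiMatrix.comp (((quatJ.continuous.comp hfst).inner hsnd).prodMk hsnd))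

@[simp]
theorem perturbedVeronese_neg
    (x : WithLp 2 (EuclideanSpace ℂ (Fin 2) × EuclideanSpace ℂ (Fin 2))) :
    perturbedVeronese (-x) = perturbedVeronese x := by
  simp [perturbedVeronese]

theorem norm_inner_quatJ_fst_snd_lt_one (hx : ‖x‖ = 1) : ‖⟪quatJ x.fst, x.snd⟫_ℂ‖ < 1 :=
  (norm_inner_le_norm _ _).trans_lt
    (by simpa using norm_fst_mul_norm_snd_lt_one hx)

theorem eq_or_eq_neg_of_perturbedVeronese_eq (hx : ‖x‖ = 1) (hy : ‖y‖ = 1)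
    (h : perturbedVeronese x = perturbedVeronese y) : x = y ∨ x = -y := by
  have hfst : takagiMatrix ⟪x.fst, x.snd⟫_ℂ x.fst = takagiMatrix ⟪y.fst, y.snd⟫_ℂ y.fst :=
    congrArg WithLp.fst h
  have hsnd : takagiMatrix ⟪quatJ x.fst, x.snd⟫_ℂ x.snd =
      takagiMatrix ⟪quatJ y.fst, y.snd⟫_ℂ y.snd :=
    congrArg WithLp.snd h
  wlog hxy : x.fst = y.fst generalizing x
  · have fst_eq := eq_or_eq_neg_of_takagiMatrix_eq (norm_inner_fst_snd_lt_one hx)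
      (norm_inner_fst_snd_lt_one hy) hfst
    have := this (x := -x) (by simpa) (by simpa) (by simpa) (by simpa)
      (by simp [fst_eq.resolve_left hxy])
    simpa [neg_eq_iff_eq_neg, or_comm] using this
  have snd_eq := eq_or_eq_neg_of_takagiMatrix_eq (norm_inner_quatJ_fst_snd_lt_one hx)
    (norm_inner_quatJ_fst_snd_lt_one hy) hsnd
  have ext_prod {v : WithLp 2 (EuclideanSpace ℂ (Fin 2) × EuclideanSpace ℂ (Fin 2))}
      (h₁ : x.fst = v.fst) (h₂ : x.snd = v.snd) : x = v :=
    WithLp.ofLp_injective 2 (Prod.ext h₁ h₂)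
  rcases eq_or_ne y.fst 0 with hy₁ | hy₁
  · exact snd_eq.imp (ext_prod hxy) (ext_prod (by simp [hxy, hy₁]))
  refine .inl (ext_prod hxy ?_)
  rcases eq_or_ne y.snd 0 with hy₂ | hy₂
  · simpa [hy₂] using snd_eq
  rw [hxy] at hfst hsnd
  have inner_eq := takagiMatrix_left_injective hy₁ hfst
  have inner_quatJ_eq : ⟪quatJ y.fst, x.snd⟫_ℂ = ⟪quatJ y.fst, y.snd⟫_ℂ := by
    apply takagiMatrix_left_injective hy₂
    rcases snd_eq with e | e
    · rw [e]
    · simpa [e] using hsnd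
  exact eq_of_inner_eq_of_inner_quatJ_eq hy₁ inner_eq inner_quatJ_eq

theorem perturbedVeronese_ne_smul_single (hx : ‖x‖ = 1) (r : ℝ) :
    perturbedVeronese x ≠ r • WithLp.toLp 2 (EuclideanSpace.single s(0, 1) 1, 0) := by
  intro h
  have hfst : takagiMatrix ⟪x.fst, x.snd⟫_ℂ x.fst = r • EuclideanSpace.single s(0, 1) 1 :=
    congrArg WithLp.fst h
  have hsnd : takagiMatrix ⟪quatJ x.fst, x.snd⟫_ℂ x.snd = 0 :=
    (congrArg WithLp.snd h).trans (smul_zero r)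
  have snd_zero : x.snd = 0 :=
    (takagiMatrix_eq_zero_iff (norm_inner_quatJ_fst_snd_lt_one hx)).mp hsnd
  have fst_zero : x.fst = 0 := by
    ext i
    have := congrArg (· s(i, i)) hfst
    fin_cases i <;> simpa [snd_zero, takagiMatrix] using this
  have := WithLp.prod_norm_sq_eq_of_L2 x
  simp [hx, fst_zero, snd_zero] at this

theorem perturbedVeronese_ne_zero (hx : ‖x‖ = 1) : perturbedVeronese x ≠ 0 := by
  simpa using perturbedVeronese_ne_smul_single hx 0

theorem perturbedVeronese_eq_of_sameRay (hx : ‖x‖ = 1) (hy : ‖y‖ = 1)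
    (h : SameRay ℝ (perturbedVeronese x) (perturbedVeronese y)) :
    perturbedVeronese x = perturbedVeronese y := by
  obtain ⟨t, ht, hxy⟩ :=
    h.exists_pos_right (perturbedVeronese_ne_zero hx) (perturbedVeronese_ne_zero hy)
  obtain ⟨r, hr, rfl⟩ : ∃ r : ℝ, 0 ≤ r ∧ r ^ 2 = t := ⟨√t, Real.sqrt_nonneg t, Real.sq_sqrt ht.le⟩
  have norm_eq {a b : EuclideanSpace ℂ (Fin 2)} {c d : ℂ} (hc : ‖c‖ < 1) (hd : ‖d‖ < 1)
      (h : takagiMatrix c a = r ^ 2 • takagiMatrix d b) : ‖a‖ = r * ‖b‖ := by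
    rw [← takagiMatrix_real_smul] at h
    rcases eq_or_eq_neg_of_takagiMatrix_eq hc hd h with rfl | rfl <;>
      simp [norm_smul, abs_of_nonneg hr]
  have hfst := norm_eq (norm_inner_fst_snd_lt_one hx) (norm_inner_fst_snd_lt_one hy)
    (congrArg WithLp.fst hxy)
  have hsnd := norm_eq (norm_inner_quatJ_fst_snd_lt_one hx) (norm_inner_quatJ_fst_snd_lt_one hy)
    (congrArg WithLp.snd hxy)
  have r_sq : r ^ 2 = 1 := calc
    r ^ 2 = r ^ 2 * ‖y‖ ^ 2 := by rw [hy, one_pow, mul_one]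
    _ = ‖x.fst‖ ^ 2 + ‖x.snd‖ ^ 2 := by rw [WithLp.prod_norm_sq_eq_of_L2, hfst, hsnd]; ring
    _ = 1 := by rw [← WithLp.prod_norm_sq_eq_of_L2, hx, one_pow]
  rw [hxy, r_sq, one_smul]

theorem sameRay_perturbedVeronese_iff (hx : ‖x‖ = 1) (hy : ‖y‖ = 1) :
    SameRay ℝ (perturbedVeronese x) (perturbedVeronese y) ↔ x = y ∨ x = -y := by
  refine ⟨fun h ↦ eq_or_eq_neg_of_perturbedVeronese_eq hx hy
    (perturbedVeronese_eq_of_sameRay hx hy h), ?_⟩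
  rintro (rfl | rfl)
  · exact .rfl
  · rw [perturbedVeronese_neg]

theorem not_sameRay_perturbedVeronese_single (hx : ‖x‖ = 1) :
    ¬ SameRay ℝ (perturbedVeronese x) (WithLp.toLp 2 (EuclideanSpace.single s(0, 1) 1, 0)) := by
  intro h
  obtain ⟨r, -, hr⟩ := h.exists_pos_right (perturbedVeronese_ne_zero hx) (by simp)
  exact perturbedVeronese_ne_smul_single hx r hr

end PerturbedVeronese

/-- `ℝP⁷`, the quotient of `S⁷` by the antipodal involution, embeds topologically in `ℝ¹¹`. -/
theorem rp7_topologically_embeds_in_R11 :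
    ∃ g : sphere (0 : EuclideanSpace ℝ (Fin 8)) 1 → EuclideanSpace ℝ (Fin 11),
      Continuous g ∧
      (∀ x : sphere (0 : EuclideanSpace ℝ (Fin 8)) 1, g (-x) = g x) ∧
      ∃ h : ∀ a b : sphere (0 : EuclideanSpace ℝ (Fin 8)) 1,
          antipodalSetoid.r a b → g a = g b,
        Topology.IsEmbedding (Quotient.lift (s := antipodalSetoid) g h) := by
  let e : EuclideanSpace ℝ (Fin 8) ≃ₗᵢ[ℝ]
      WithLp 2 (EuclideanSpace ℂ (Fin 2) × EuclideanSpace ℂ (Fin 2)) :=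
    ((stdOrthonormalBasis ℝ _).reindex (finCongr (finrank_real_withLp_prod (Fin 2)))).repr.symm
  have norm_e (x : sphere (0 : EuclideanSpace ℝ (Fin 8)) 1) : ‖e x‖ = 1 := by simp
  have : Fact (finrank ℝ (WithLp 2
      (EuclideanSpace ℂ (Sym2 (Fin 2)) × EuclideanSpace ℂ (Sym2 (Fin 2)))) = 11 + 1) :=
    ⟨by simp [finrank_real_withLp_prod, Sym2.card]⟩
  obtain ⟨g, hg, g_eq_iff⟩ := exists_continuous_eq_iff_sameRay (n := 11)
    (continuous_perturbedVeronese.comp (e.continuous.comp continuous_subtype_val))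
    (by simp) (fun x ↦ not_sameRay_perturbedVeronese_single (norm_e x))
  have g_eq_iff_antipodal (x y) : g x = g y ↔ antipodalSetoid.r x y := by
    refine (g_eq_iff x y).trans
      ((sameRay_perturbedVeronese_iff (norm_e x) (norm_e y)).trans (or_congr ?_ ?_))
    · rw [e.injective.eq_iff, Subtype.ext_iff]
    · rw [← map_neg, e.injective.eq_iff, Subtype.ext_iff, coe_neg_sphere]
  exact ⟨g, hg, fun x ↦ (g_eq_iff_antipodal _ _).mpr (.inr rfl),
    fun x y ↦ (g_eq_iff_antipodal x y).mpr,
    isEmbedding_quotientLift_of_compactSpace hg _ fun x y ↦ (g_eq_iff_antipodal x y).mp⟩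
end
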